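/- arXiv:math/9302207 — 2 statements merged into one kernel-verified Lean document; each statement's English description precedes it below -/
import Mathlib

section
/- Let K be a compact Hausdorff space, Y a real Banach space, and T : C(K) → Y a bounded linear operator of rank at most n. Let 1 < p < ∞, p ≠ 2, with conjugate exponent p'. There is a constant c_p (depending only on p) such that: if 2 < p < ∞ then π_p(T) ≤ c_p · (1 + ln n)^{1/p'} · π_p^n(T), and if 1 < p < 2 then π_p(T) ≤ c_p · (1 + ln n)^{1/p'} · π_p^{m}(T) with m = ⌊n^{p'/2}⌋. -/
open scoped ENNReal NNReal BigOperators

noncomputable section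

/-- The `ℓ_p`-sum `(∑ i, f i ^ p) ^ (1/p)` of a finite family in `ℝ≥0∞`,
with the usual sup-modification for `p = ∞`. -/
def eSum (p : ℝ≥0∞) {ι : Type*} [Fintype ι] (f : ι → ℝ≥0∞) : ℝ≥0∞ :=
  if p = ∞ then ⨆ i, f i else (∑ i, f i ^ p.toReal) ^ (1 / p.toReal)

/-- The weak `ℓ_q`-norm of a finite family of vectors:
`sup { (∑ k |⟨x_k, x*⟩|^q)^(1/q) : x* in the unit ball of the dual }`. -/
def weakLq (q : ℝ≥0∞) {X : Type*} [NormedAddCommGroup X] [NormedSpace ℝ X]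
    {n : ℕ} (x : Fin n → X) : ℝ≥0∞ :=
  ⨆ f : {f : X →L[ℝ] ℝ // ‖f‖ ≤ 1}, eSum q fun k => ENNReal.ofReal |f.1 (x k)|

/-- The `(p,q)`-summing norm of `T` with respect to `n` vectors. -/
def piN (p q : ℝ≥0∞) {X Y : Type*} [NormedAddCommGroup X] [NormedSpace ℝ X]
    [NormedAddCommGroup Y] [NormedSpace ℝ Y] (n : ℕ) (T : X →L[ℝ] Y) : ℝ≥0∞ :=
  ⨆ x : {x : Fin n → X // weakLq q x ≤ 1}, eSum p fun k => ENNReal.ofReal ‖T (x.1 k)‖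

/-- The `(p,q)`-summing norm of `T`. -/
def piPQ (p q : ℝ≥0∞) {X Y : Type*} [NormedAddCommGroup X] [NormedSpace ℝ X]
    [NormedAddCommGroup Y] [NormedSpace ℝ Y] (T : X →L[ℝ] Y) : ℝ≥0∞ :=
  ⨆ n : ℕ, piN p q n T

/-- `T` has rank at most `n`: its range is a finite-dimensional subspace of
dimension at most `n`. -/
def RankLE {X Y : Type*} [NormedAddCommGroup X] [NormedSpace ℝ X]
    [NormedAddCommGroup Y] [NormedSpace ℝ Y] (T : X →L[ℝ] Y) (n : ℕ) : Prop :=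
  FiniteDimensional ℝ (LinearMap.range (T : X →ₗ[ℝ] Y)) ∧
    Module.finrank ℝ (LinearMap.range (T : X →ₗ[ℝ] Y)) ≤ n

/-- The average of `‖∑ k, ε k • x k‖²` over all `2^n` sign choices `ε ∈ {-1,1}^n`. -/
def radAvg {X : Type*} [NormedAddCommGroup X] [NormedSpace ℝ X] {n : ℕ}
    (x : Fin n → X) : ℝ :=
  (∑ ε : Fin n → Bool, ‖∑ k, (if ε k then (1 : ℝ) else -1) • x k‖ ^ 2) / 2 ^ n

/-- The Rademacher cotype `q` constant of `T` with respect to `n` vectors. -/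
def cotypeN (q : ℝ) {X Y : Type*} [NormedAddCommGroup X] [NormedSpace ℝ X]
    [NormedAddCommGroup Y] [NormedSpace ℝ Y] (n : ℕ) (T : X →L[ℝ] Y) : ℝ≥0∞ :=
  ⨆ x : {x : Fin n → X // Real.sqrt (radAvg x) ≤ 1},
    (∑ k, ENNReal.ofReal ‖T (x.1 k)‖ ^ q) ^ (1 / q)

/-- The Rademacher cotype `q` constant of `T`. -/
def cotype (q : ℝ) {X Y : Type*} [NormedAddCommGroup X] [NormedSpace ℝ X]
    [NormedAddCommGroup Y] [NormedSpace ℝ Y] (T : X →L[ℝ] Y) : ℝ≥0∞ :=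
  ⨆ n : ℕ, cotypeN q n T



lemma sm_inverse {d : ℕ} (M R : Matrix (Fin d) (Fin d) ℝ) (hMR : M * R = 1) (hRs : R.transpose = R)
    (u : Fin d → ℝ) (t : ℝ) (ht : 1 - t * (u ⬝ᵥ R.mulVec u) ≠ 0) :
    (M - t • Matrix.vecMulVec u u) *
      (R + (t / (1 - t * (u ⬝ᵥ R.mulVec u))) • Matrix.vecMulVec (R.mulVec u) (R.mulVec u)) = 1 := by
  set q := u ⬝ᵥ R.mulVec u with hq
  have h1 : M * Matrix.vecMulVec (R.mulVec u) (R.mulVec u) = Matrix.vecMulVec u (R.mulVec u) := by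
    rw [Matrix.mul_vecMulVec, Matrix.mulVec_mulVec, hMR, Matrix.one_mulVec]
  have h2 : Matrix.vecMulVec u u * R = Matrix.vecMulVec u (R.mulVec u) := by
    rw [Matrix.vecMulVec_mul, ← Matrix.mulVec_transpose, hRs]
  have h3 : Matrix.vecMulVec u u * Matrix.vecMulVec (R.mulVec u) (R.mulVec u)
      = q • Matrix.vecMulVec u (R.mulVec u) := by
    rw [Matrix.vecMulVec_mul_vecMulVec]
    ext i j; simp [Matrix.vecMulVec_apply, ← hq]; ring
  rw [sub_mul, mul_add, mul_add, hMR, Matrix.mul_smul, h1, Matrix.smul_mul, h2, Matrix.smul_mul,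
    Matrix.mul_smul, h3]
  have : t / (1 - t * q) - t - t * (t / (1 - t * q)) * q = 0 := by field_simp; ring
  ext i j
  simp only [Matrix.sub_apply, Matrix.add_apply, Matrix.smul_apply, smul_eq_mul]
  linear_combination (Matrix.vecMulVec u (R.mulVec u) i j) * this

lemma bss_step {d : ℕ} {ι : Type} [Fintype ι] (u : ι → Fin d → ℝ)
    (hu : ∑ k, Matrix.vecMulVec (u k) (u k) = (1 : Matrix (Fin d) (Fin d) ℝ))
    (b : ι → ℝ) (hb : ∀ k, 0 ≤ b k) (hb0 : ∀ k, u k = 0 → b k = 0) (hB : 0 < ∑ k, b k)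
    (N : Matrix (Fin d) (Fin d) ℝ) (hN : N.PosDef) (htr : N.trace ≤ 1) :
    ∃ k, ∃ t : ℝ, 0 ≤ t ∧ ∃ N' : Matrix (Fin d) (Fin d) ℝ, N'.PosDef ∧ N'.trace ≤ 1 ∧
      N'⁻¹ = N⁻¹ + 1 - t • Matrix.vecMulVec (u k) (u k) ∧ (∑ k, b k) / 2 ≤ t * b k := by
  set M := N⁻¹ + 1 with hMdef
  have hM : M.PosDef := hN.inv.add Matrix.PosDef.one
  set R := M⁻¹ with hRdef
  have hR : R.PosDef := hM.inv
  have hMR : M * R = 1 := Matrix.mul_nonsing_inv _ ((Matrix.isUnit_iff_isUnit_det _).1 hM.isUnit)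
  have hNN : N * N⁻¹ = 1 := Matrix.mul_nonsing_inv _ ((Matrix.isUnit_iff_isUnit_det _).1 hN.isUnit)
  have hRs : R.transpose = R := by
    have := hR.isHermitian.eq
    rwa [Matrix.conjTranspose_eq_transpose_of_trivial] at this
  have hNR : N = R + N * R := by
    have : N * M * R = (1 + N) * R := by rw [hMdef, mul_add, hNN, mul_one]
    rw [mul_assoc, hMR, mul_one, add_mul, one_mul] at this
    exact this
  have htrNR : N.trace - R.trace = (R * R).trace + (R * N * R).trace := by
    have h1 : N.trace = R.trace + (N * R).trace := by
      conv_lhs => rw [hNR]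
      rw [Matrix.trace_add]
    have h2 : (N * R).trace = (R * R).trace + (N * R * R).trace := by
      conv_lhs => rw [hNR]
      rw [add_mul, Matrix.trace_add]
    have h3 : (N * R * R).trace = (R * N * R).trace := by
      rw [Matrix.trace_mul_comm, ← mul_assoc]
    rw [h1, h2, h3]; ring
  have hRNR : 0 ≤ (R * N * R).trace := by
    have := (hN.posSemidef.conjTranspose_mul_mul_same R).trace_nonneg
    rwa [Matrix.conjTranspose_eq_transpose_of_trivial, hRs] at this
  set q1 : ι → ℝ := fun k => u k ⬝ᵥ R.mulVec (u k) with hq1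
  set q2 : ι → ℝ := fun k => R.mulVec (u k) ⬝ᵥ R.mulVec (u k) with hq2
  have hq1nn : ∀ k, 0 ≤ q1 k := fun k => by
    have := hR.posSemidef.dotProduct_mulVec_nonneg (u k)
    simpa using this
  have hq2nn : ∀ k, 0 ≤ q2 k := fun k => by
    simp only [hq2, dotProduct]
    exact Finset.sum_nonneg fun i _ => mul_self_nonneg _
  have hq2pos : ∀ k, u k ≠ 0 → 0 < q2 k := fun k hk => by
    refine lt_of_le_of_ne (hq2nn k) fun h => hk ?_
    have h0 : R.mulVec (u k) = 0 := by
      have := h.symm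
      simpa [hq2] using this
    have := congrArg M.mulVec h0
    rwa [Matrix.mulVec_mulVec, hMR, Matrix.one_mulVec, Matrix.mulVec_zero] at this
  have hs1 : ∑ k, q1 k = R.trace := by
    have : R.trace = (R * ∑ k, Matrix.vecMulVec (u k) (u k)).trace := by rw [hu, mul_one]
    rw [this, Finset.mul_sum, Matrix.trace_sum]
    refine Finset.sum_congr rfl fun k _ => ?_
    rw [Matrix.mul_vecMulVec, Matrix.trace_vecMulVec, dotProduct_comm]
  have hs2 : ∑ k, q2 k = (R * R).trace := by
    have : (R * R).trace = (R * (∑ k, Matrix.vecMulVec (u k) (u k)) * R).trace := by rw [hu, mul_one]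
    rw [this, Finset.mul_sum, Finset.sum_mul, Matrix.trace_sum]
    refine Finset.sum_congr rfl fun k _ => ?_
    rw [Matrix.mul_vecMulVec, Matrix.vecMulVec_mul, ← Matrix.mulVec_transpose, hRs, Matrix.trace_vecMulVec]
  set δ := N.trace - R.trace with hδ
  have hδ2 : ∑ k, q2 k ≤ δ := by rw [hs2, htrNR]; linarith
  obtain ⟨k0, -, hk0⟩ := Finset.exists_ne_zero_of_sum_ne_zero hB.ne'
  have hδpos : 0 < δ := by
    refine lt_of_lt_of_le (hq2pos k0 fun h => hk0 (hb0 _ h)) (le_trans ?_ hδ2)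
    exact Finset.single_le_sum (f := q2) (fun i _ => hq2nn i) (Finset.mem_univ k0)
  set B := ∑ k, b k with hBdef
  set U : ι → ℝ := fun k => q2 k / δ + q1 k with hU
  have hUnn : ∀ k, 0 ≤ U k := fun k => add_nonneg (div_nonneg (hq2nn k) hδpos.le) (hq1nn k)
  have hUs : ∑ k, U k ≤ 2 := by
    simp only [hU, Finset.sum_add_distrib, ← Finset.sum_div]
    have : (∑ k, q2 k) / δ ≤ 1 := by rw [div_le_one hδpos]; exact hδ2
    have : R.trace ≤ 1 := by linarith
    linarith
  obtain ⟨k, hk, hkb⟩ : ∃ k, u k ≠ 0 ∧ B / 2 * U k ≤ b k := by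
    by_contra! hcon
    have : ∑ k, b k < ∑ k, B / 2 * U k := by
      refine Finset.sum_lt_sum (fun k _ => ?_) ⟨k0, Finset.mem_univ _, hcon k0 fun h => hk0 (hb0 _ h)⟩
      by_cases h : u k = 0
      · rw [hb0 k h]; exact mul_nonneg (by linarith) (hUnn k)
      · exact (hcon k h).le
    rw [← Finset.mul_sum] at this
    nlinarith
  have hUpos : 0 < U k := add_pos_of_pos_of_nonneg (div_pos (hq2pos k hk) hδpos) (hq1nn k)
  have ht1 : 1 - (U k)⁻¹ * q1 k = (q2 k / δ) / U k := by
    have : q1 k = U k - q2 k / δ := by simp [hU]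
    rw [this]; field_simp; ring
  have ht1pos : 0 < 1 - (U k)⁻¹ * q1 k := by
    rw [ht1]; exact div_pos (div_pos (hq2pos k hk) hδpos) hUpos
  have hco : (U k)⁻¹ / (1 - (U k)⁻¹ * q1 k) = δ / q2 k := by
    rw [ht1]; have := (hq2pos k hk).ne'; field_simp
  have hsm := sm_inverse M R hMR hRs (u k) (U k)⁻¹ ht1pos.ne'
  refine ⟨k, (U k)⁻¹, inv_nonneg.2 hUpos.le, _, ?_, ?_, Matrix.inv_eq_left_inv hsm, ?_⟩
  · refine hR.add_posSemidef (Matrix.PosSemidef.smul ?_ (div_nonneg (inv_nonneg.2 hUpos.le) ht1pos.le))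
    simpa using Matrix.posSemidef_vecMulVec_self_star (R.mulVec (u k))
  · change (R + ((U k)⁻¹ / (1 - (U k)⁻¹ * q1 k)) • _).trace ≤ 1
    rw [hco, Matrix.trace_add, Matrix.trace_smul, Matrix.trace_vecMulVec]
    change R.trace + (δ / q2 k) * q2 k ≤ 1
    rw [div_mul_cancel₀ _ (hq2pos k hk).ne']
    linarith
  · rw [inv_mul_eq_div, le_div_iff₀ hUpos]; exact hkb

lemma bss {d : ℕ} (hd : 0 < d) {ι : Type} [Fintype ι] (u : ι → Fin d → ℝ)
    (hu : ∑ k, Matrix.vecMulVec (u k) (u k) = (1 : Matrix (Fin d) (Fin d) ℝ))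
    (b : ι → ℝ) (hb : ∀ k, 0 ≤ b k) (hb0 : ∀ k, u k = 0 → b k = 0) (hB : 0 < ∑ k, b k) (j : ℕ) :
    ∃ (κ : Fin j → ι) (t : Fin j → ℝ) (N : Matrix (Fin d) (Fin d) ℝ), (∀ i, 0 ≤ t i) ∧ N.PosDef ∧
      N.trace ≤ 1 ∧
      N⁻¹ = ((d : ℝ) + j) • (1 : Matrix (Fin d) (Fin d) ℝ) -
        ∑ i, t i • Matrix.vecMulVec (u (κ i)) (u (κ i)) ∧
      j * ((∑ k, b k) / 2) ≤ ∑ i, t i * b (κ i) := by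
  have hd' : (0 : ℝ) < d := by exact_mod_cast hd
  induction j with
  | zero =>
    refine ⟨Fin.elim0, Fin.elim0, (d : ℝ)⁻¹ • 1, fun i => i.elim0, ?_, ?_, ?_, by simp⟩
    · exact Matrix.PosDef.one.smul (inv_pos.2 hd')
    · rw [Matrix.trace_smul, Matrix.trace_one]; simp [hd'.ne']
    · apply Matrix.inv_eq_left_inv
      simp [smul_smul, hd'.ne']
  | succ j ih =>
    obtain ⟨κ, t, N, ht, hN, htr, hinv, hs⟩ := ih
    obtain ⟨k, s, hs0, N', hN', htr', hinv', hs'⟩ := bss_step u hu b hb hb0 hB N hN htr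
    refine ⟨Fin.cons k κ, Fin.cons s t, N', ?_, hN', htr', ?_, ?_⟩
    · intro i; refine Fin.cases ?_ ?_ i
      · simpa using hs0
      · intro i; simpa using ht i
    · rw [hinv', hinv, Fin.sum_univ_succ]
      simp only [Fin.cons_zero, Fin.cons_succ]
      push_cast
      rw [← add_assoc, add_smul ((d:ℝ) + j), one_smul]
      abel
    · rw [Fin.sum_univ_succ]
      simp only [Fin.cons_zero, Fin.cons_succ]
      push_cast
      linarith

lemma bss_final {d : ℕ} {ι : Type} [Fintype ι] (u : ι → Fin d → ℝ)
    (hu : ∑ k, Matrix.vecMulVec (u k) (u k) = (1 : Matrix (Fin d) (Fin d) ℝ))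
    (b : ι → ℝ) (hb : ∀ k, 0 ≤ b k) (hb0 : ∀ k, u k = 0 → b k = 0) :
    (∑ k, b k = 0) ∨ ∃ (κ : Fin d → ι) (t : Fin d → ℝ), (∀ i, 0 ≤ t i) ∧
      (∀ y : Fin d → ℝ, ∑ i, t i * (u (κ i) ⬝ᵥ y) ^ 2 ≤ ∑ l, y l ^ 2) ∧
      (∑ k, b k) / 4 ≤ ∑ i, t i * b (κ i) := by
  rcases (Finset.sum_nonneg fun k (_ : k ∈ Finset.univ) => hb k).eq_or_lt with h | hB
  · exact Or.inl h.symm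
  refine Or.inr ?_
  rcases Nat.eq_zero_or_pos d with rfl | hd
  · exfalso
    refine hB.ne' (Finset.sum_eq_zero fun k _ => hb0 k (Subsingleton.elim _ _))
  have hd' : (0 : ℝ) < d := by exact_mod_cast hd
  obtain ⟨κ, t, N, ht, hN, -, hinv, hs⟩ := bss hd u hu b hb hb0 hB d
  refine ⟨κ, fun i => t i / (2 * d), fun i => div_nonneg (ht i) (by positivity), fun y => ?_, ?_⟩
  · have h1 := hN.inv.posSemidef.dotProduct_mulVec_nonneg y
    rw [hinv, Matrix.sub_mulVec, Matrix.smul_mulVec, Matrix.one_mulVec, Matrix.sum_mulVec] at h1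
    simp only [star_trivial, dotProduct_sub, dotProduct_smul, dotProduct_sum,
      Matrix.smul_mulVec, Matrix.vecMulVec_mulVec] at h1
    have h2 : ∀ i, t i / (2 * d) * (u (κ i) ⬝ᵥ y) ^ 2 = (t i * (u (κ i) ⬝ᵥ y) ^ 2) / (2 * d) :=
      fun i => by ring
    simp only [h2, ← Finset.sum_div]
    rw [div_le_iff₀ (by positivity)]
    have h3 : ∑ l, y l ^ 2 = y ⬝ᵥ y := by simp [dotProduct, sq]
    have h4 : ∀ i, y ⬝ᵥ u (κ i) = u (κ i) ⬝ᵥ y := fun i => dotProduct_comm _ _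
    rw [h3]
    simp [h4] at h1
    have h5 : ∑ i, t i * (u (κ i) ⬝ᵥ y) ^ 2 = ∑ i, t i * ((u (κ i) ⬝ᵥ y) * (u (κ i) ⬝ᵥ y)) := by
      simp only [sq]
    rw [h5]
    linarith
  · have h2 : ∀ i, t i / (2 * d) * b (κ i) = (t i * b (κ i)) / (2 * d) := fun i => by ring
    simp only [h2, ← Finset.sum_div]
    rw [le_div_iff₀ (by positivity)]
    linarith


lemma rank_decomp {ι : Type} [Fintype ι] [DecidableEq ι] {Y : Type*} [NormedAddCommGroup Y]
    [NormedSpace ℝ Y] (w : EuclideanSpace ℝ ι →ₗ[ℝ] Y) (n : ℕ)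
    (hr : Module.finrank ℝ (LinearMap.range w) ≤ n) :
    ∃ (d : ℕ) (_ : d ≤ n) (U : ι → Fin d → ℝ) (β : Fin d → EuclideanSpace ℝ ι),
      Orthonormal ℝ β ∧ (∀ i j, ∑ k, U k i * U k j = if i = j then 1 else 0) ∧
      ∀ k, w (EuclideanSpace.single k 1) = w (∑ i, U k i • β i) := by
  obtain ⟨V, hV⟩ : ∃ V : Submodule ℝ (EuclideanSpace ℝ ι), V = (LinearMap.ker w)ᗮ := ⟨_, rfl⟩
  have hfr : Module.finrank ℝ V ≤ n := by
    have h1 := Submodule.finrank_add_finrank_orthogonal (LinearMap.ker w)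
    have h2 := LinearMap.finrank_range_add_finrank_ker w
    rw [← hV] at h1
    refine le_trans (le_of_eq ?_) hr
    exact Nat.add_left_cancel (h1.trans (h2.symm.trans (Nat.add_comm _ _)))
  have hperp : ∀ v ∈ Vᗮ, w v = 0 := by
    intro v hv
    rw [hV, Submodule.orthogonal_orthogonal, LinearMap.mem_ker] at hv
    exact hv
  clear hV
  obtain ⟨d, hd⟩ : ∃ d, d = Module.finrank ℝ V := ⟨_, rfl⟩
  obtain ⟨β0, -⟩ : ∃ β0 : OrthonormalBasis (Fin d) ℝ V, True :=
    ⟨(stdOrthonormalBasis ℝ V).reindex (finCongr hd.symm), trivial⟩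
  have hβ : Orthonormal ℝ (fun i => (β0 i : EuclideanSpace ℝ ι)) :=
    β0.orthonormal.comp_linearIsometry V.subtypeₗᵢ
  refine ⟨d, hd ▸ hfr, fun k i => (β0 i : EuclideanSpace ℝ ι) k, fun i => β0 i, hβ, ?_, ?_⟩
  · intro i j
    have := (orthonormal_iff_ite.1 hβ) i j
    rw [← this, PiLp.inner_apply]
    refine Finset.sum_congr rfl fun k _ => ?_
    rw [real_inner_eq_re_inner]
    simp [mul_comm]
  · intro k
    have h := hperp _ (V.sub_starProjection_mem_orthogonal (EuclideanSpace.single k (1:ℝ)))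
    rw [map_sub, sub_eq_zero] at h
    rw [h]
    congr 1
    rw [Submodule.starProjection_apply, β0.orthogonalProjectionOnto_apply_eq_sum]
    simp only [Submodule.coe_sum, Submodule.coe_smul]
    refine Finset.sum_congr rfl fun i _ => ?_
    congr 1
    rw [EuclideanSpace.inner_single_right]
    simp

lemma sum_sq_le_rank {ι : Type} [Fintype ι] [DecidableEq ι] {Y : Type*} [NormedAddCommGroup Y]
    [NormedSpace ℝ Y] (w : EuclideanSpace ℝ ι →ₗ[ℝ] Y) (n : ℕ)
    (hr : Module.finrank ℝ (LinearMap.range w) ≤ n) (D : ℝ) (hD : ∀ a, ‖w a‖ ^ 2 ≤ D * ‖a‖ ^ 2)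
    (hD0 : 0 ≤ D) :
    ∑ k, ‖w (EuclideanSpace.single k 1)‖ ^ 2 ≤ n * D := by
  obtain ⟨d, hdn, U, β, hβ, hU, hw⟩ := rank_decomp w n hr
  have h1 : ∀ k, ‖w (EuclideanSpace.single k 1)‖ ^ 2 ≤ D * ∑ i, U k i * U k i := by
    intro k
    rw [hw k]
    refine (hD _).trans_eq ?_
    rw [← real_inner_self_eq_norm_sq, hβ.inner_sum]
    simp
  calc _ ≤ ∑ k, D * ∑ i, U k i * U k i := Finset.sum_le_sum fun k _ => h1 k
    _ = D * ∑ i, ∑ k, U k i * U k i := by rw [← Finset.mul_sum, Finset.sum_comm]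
    _ = D * d := by simp [hU]
    _ ≤ n * D := by
      rw [mul_comm]; gcongr

lemma select_vectors {ι : Type} [Fintype ι] [DecidableEq ι] {Y : Type*} [NormedAddCommGroup Y]
    [NormedSpace ℝ Y] (w : EuclideanSpace ℝ ι →ₗ[ℝ] Y) (n : ℕ)
    (hr : Module.finrank ℝ (LinearMap.range w) ≤ n) :
    ∃ v : Fin n → EuclideanSpace ℝ ι, (∀ y, ∑ i, (inner ℝ (v i) y) ^ 2 ≤ ‖y‖ ^ 2) ∧
      (∑ k, ‖w (EuclideanSpace.single k 1)‖ ^ 2) / 4 ≤ ∑ i, ‖w (v i)‖ ^ 2 := by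
  obtain ⟨d, hdn, U, β, hβ, hU, hw⟩ := rank_decomp w n hr
  have hu : ∑ k, Matrix.vecMulVec (U k) (U k) = (1 : Matrix (Fin d) (Fin d) ℝ) := by
    ext i j
    rw [Matrix.sum_apply]
    simp only [Matrix.vecMulVec_apply, hU, Matrix.one_apply]
  rcases bss_final U hu (fun k => ‖w (EuclideanSpace.single k 1)‖ ^ 2) (fun k => by positivity)
    (fun k hk => by rw [hw k, hk]; simp) with h | ⟨κ, t, ht, hy, hs⟩
  · refine ⟨fun _ => 0, fun y => by simp, ?_⟩
    rw [h]; simp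
  · obtain ⟨m, rfl⟩ := Nat.exists_eq_add_of_le hdn
    refine ⟨Fin.append (fun i => Real.sqrt (t i) • ∑ l, U (κ i) l • β l) (fun _ => 0), fun y => ?_, ?_⟩
    · rw [Fin.sum_univ_add]
      simp only [Fin.append_left, Fin.append_right, inner_zero_left]
      have h1 := hy (fun l => inner ℝ (β l) y)
      have h2 := hβ.sum_inner_products_le y (s := Finset.univ)
      simp only [Real.norm_eq_abs, sq_abs] at h2
      simp only [ne_eq, OfNat.ofNat_ne_zero, not_false_eq_true, zero_pow, Finset.sum_const_zero, add_zero]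
      refine le_trans (le_of_eq ?_) (h1.trans h2)
      refine Finset.sum_congr rfl fun i _ => ?_
      rw [real_inner_smul_left, mul_pow, Real.sq_sqrt (ht i), sum_inner]
      simp [real_inner_smul_left, dotProduct]
    · rw [Fin.sum_univ_add]
      simp only [Fin.append_left, Fin.append_right, map_zero, norm_zero]
      simp only [ne_eq, OfNat.ofNat_ne_zero, not_false_eq_true, zero_pow, Finset.sum_const_zero, add_zero]
      refine hs.trans (le_of_eq ?_)
      refine Finset.sum_congr rfl fun i _ => ?_
      rw [map_smul, ← hw, norm_smul, mul_pow, Real.norm_eq_abs, sq_abs, Real.sq_sqrt (ht i)]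

/-- synthesis map. -/
def synth {ι : Type} [Fintype ι] {X : Type*} [AddCommGroup X] [Module ℝ X] (x : ι → X) :
    EuclideanSpace ℝ ι →ₗ[ℝ] X where
  toFun a := ∑ k, a k • x k
  map_add' a b := by simp [add_smul, Finset.sum_add_distrib]
  map_smul' c a := by simp [mul_smul, Finset.smul_sum]

lemma synth_single {ι : Type} [Fintype ι] [DecidableEq ι] {X : Type*} [AddCommGroup X] [Module ℝ X]
    (x : ι → X) (k : ι) : synth x (EuclideanSpace.single k 1) = x k := by
  simp [synth, PiLp.single_apply]

section CK
variable {K : Type*} [TopologicalSpace K] [CompactSpace K] {Y : Type*} [NormedAddCommGroup Y]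
  [NormedSpace ℝ Y]

lemma finrank_comp_le (T : C(K, ℝ) →L[ℝ] Y) (n : ℕ) (hT : RankLE T n)
    {E : Type*} [AddCommGroup E] [Module ℝ E] (S : E →ₗ[ℝ] C(K, ℝ)) :
    Module.finrank ℝ (LinearMap.range ((T : C(K, ℝ) →ₗ[ℝ] Y) ∘ₗ S)) ≤ n := by
  have := hT.1
  exact (Submodule.finrank_mono (LinearMap.range_comp_le_range _ _)).trans hT.2

lemma two_summing (T : C(K, ℝ) →L[ℝ] Y) (n : ℕ) (hT : RankLE T n) (D : ℝ)
    (hD : ∀ y : Fin n → C(K, ℝ), (∀ t, ∑ i, (y i t) ^ 2 ≤ 1) → ∑ i, ‖T (y i)‖ ^ 2 ≤ D)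
    {ι : Type} [Fintype ι] (x : ι → C(K, ℝ)) (hx : ∀ t, ∑ k, (x k t) ^ 2 ≤ 1) :
    ∑ k, ‖T (x k)‖ ^ 2 ≤ 4 * D := by
  classical
  obtain ⟨v, hv, hs⟩ := select_vectors ((T : C(K, ℝ) →ₗ[ℝ] Y) ∘ₗ synth x) n (finrank_comp_le T n hT _)
  simp only [LinearMap.comp_apply, synth_single] at hs
  have h := hD (fun i => synth x (v i)) fun t => by
    refine le_trans ?_ (hx t)
    have := hv (WithLp.toLp 2 fun k => x k t)
    rw [EuclideanSpace.real_norm_sq_eq] at this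
    refine le_trans (le_of_eq ?_) this
    refine Finset.sum_congr rfl fun i _ => ?_
    rw [PiLp.inner_apply]
    simp [synth, mul_comm]
  simp only [ContinuousLinearMap.coe_coe] at hs
  linarith

end CK


section CK2

lemma exists_pos_functional {K : Type*} [TopologicalSpace K] [CompactSpace K] [Nonempty K]
    {ι : Type*} [Nonempty ι] (G : ι → ℝ) (h : ι → C(K, ℝ))
    (H : ∀ (s : Finset ι) (c : ι → ℝ), (∀ i, 0 ≤ c i) →
      ∃ t, ∑ i ∈ s, c i * G i ≤ ∑ i ∈ s, c i * h i t) :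
    ∃ L : C(K, ℝ) →L[ℝ] ℝ, (∀ f : C(K, ℝ), (∀ t, 0 ≤ f t) → 0 ≤ L f) ∧ L 1 = 1 ∧
      ∀ i, G i ≤ L (h i) := by
  let O : Set C(K, ℝ) := {f | ∀ t, 0 < f t}
  let q : ι → C(K, ℝ) := fun i => G i • 1 - h i
  let Q : Set C(K, ℝ) := convexHull ℝ (Set.range q)
  have hO1 : Convex ℝ O := by
    intro f hf g hg a b ha hb hab t
    simp only [ContinuousMap.add_apply, ContinuousMap.smul_apply, smul_eq_mul]
    rcases ha.eq_or_lt with rfl | ha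
    · have : b = 1 := by linarith
      subst this; simpa using hg t
    · have := mul_pos ha (hf t); have := mul_nonneg hb (hg t).le; linarith
  have hO2 : IsOpen O := by
    have : O = {f : C(K, ℝ) | Set.MapsTo f Set.univ (Set.Ioi 0)} := by
      ext f; simp [O, Set.MapsTo]
    rw [this]
    exact ContinuousMap.isOpen_setOfPred_mapsTo isCompact_univ isOpen_Ioi
  have hdis : Disjoint O Q := by
    rw [Set.disjoint_left]
    intro f hf hfQ
    change f ∈ convexHull ℝ (Set.range q) at hfQ
    rw [convexHull_range_eq_exists_affineCombination] at hfQ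
    obtain ⟨s, w, hw0, hw1, rfl⟩ := hfQ
    classical
    obtain ⟨t, ht⟩ := H s (fun i => if i ∈ s then w i else 0) (fun i => by
      by_cases hi : i ∈ s
      · simp [hi, hw0 i hi]
      · simp [hi])
    have h1 := hf t
    rw [Finset.affineCombination_eq_linear_combination _ _ _ hw1] at h1
    rw [ContinuousMap.sum_apply] at h1
    have e1 : ∑ i ∈ s, (if i ∈ s then w i else 0) * G i = ∑ i ∈ s, w i * G i :=
      Finset.sum_congr rfl fun i hi => by rw [if_pos hi]
    have e2 : ∑ i ∈ s, (if i ∈ s then w i else 0) * h i t = ∑ i ∈ s, w i * h i t :=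
      Finset.sum_congr rfl fun i hi => by rw [if_pos hi]
    rw [e1, e2] at ht
    simp [q, mul_sub] at h1
    linarith
  obtain ⟨f, u, hf1, hf2⟩ := geometric_hahn_banach_open hO1 hO2 (convex_convexHull ℝ _) hdis
  have hq : ∀ i, u ≤ f (q i) := fun i => hf2 _ (subset_convexHull ℝ _ ⟨i, rfl⟩)
  have hneg : ∀ g ∈ O, f g ≤ 0 := by
    intro g hg
    by_contra! hcon
    have h1 : ((|u| + 1) / f g) • g ∈ O := fun t => by
      simp only [ContinuousMap.smul_apply, smul_eq_mul]
      exact mul_pos (by positivity) (hg t)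
    have := hf1 _ h1
    rw [map_smul, smul_eq_mul, div_mul_cancel₀ _ hcon.ne'] at this
    have := le_abs_self u
    linarith
  have h1O : (1 : C(K, ℝ)) ∈ O := fun t => by simp
  have hu0 : 0 ≤ u := by
    by_contra! hcon
    have h1 : (|u| / 2 / (1 + |f 1|)) • (1 : C(K, ℝ)) ∈ O := fun t => by
      simp only [ContinuousMap.smul_apply, smul_eq_mul]
      have : 0 < |u| := abs_pos.2 hcon.ne
      simp; positivity
    have h2 := hf1 _ h1
    rw [map_smul, smul_eq_mul, abs_of_neg hcon] at h2
    have h3 : -(-u / 2) ≤ -u / 2 / (1 + |f 1|) * f 1 := by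
      rw [div_mul_eq_mul_div, le_div_iff₀ (by positivity)]
      have := neg_abs_le (f 1)
      nlinarith
    linarith
  have hpos : ∀ g : C(K, ℝ), (∀ t, 0 ≤ g t) → f g ≤ 0 := by
    intro g hg
    by_contra! hcon
    have h1 : g + (f g / 2 / (1 + |f 1|)) • (1 : C(K, ℝ)) ∈ O := fun t => by
      have := hg t
      simp only [ContinuousMap.add_apply, ContinuousMap.smul_apply, smul_eq_mul,
        ContinuousMap.one_apply, mul_one]
      positivity
    have h2 := hneg _ h1
    rw [map_add, map_smul, smul_eq_mul] at h2
    have h3 : -(f g / 2) ≤ f g / 2 / (1 + |f 1|) * f 1 := by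
      rw [div_mul_eq_mul_div, le_div_iff₀ (by positivity)]
      have := neg_abs_le (f 1)
      nlinarith
    linarith
  have hf1neg : f 1 < 0 := by
    refine lt_of_le_of_ne (hneg _ h1O) fun h0 => ?_
    have hz : ∀ g : C(K, ℝ), f g = 0 := by
      intro g
      have a1 := hpos (‖g‖ • 1 - g) fun t => by
        have := (le_abs_self _).trans (g.norm_coe_le_norm t)
        simp; linarith
      have a2 := hpos (‖g‖ • 1 + g) fun t => by
        have := (neg_abs_le _).trans' (neg_le_neg (g.norm_coe_le_norm t))
        simp; linarith
      rw [map_sub, map_smul, h0, smul_zero] at a1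
      rw [map_add, map_smul, h0, smul_zero] at a2
      linarith
    have b1 := hf1 _ h1O
    obtain ⟨i⟩ := ‹Nonempty ι›
    have b2 := hq i
    rw [hz] at b1 b2
    linarith
  refine ⟨(f 1)⁻¹ • f, fun g hg => ?_, ?_, fun i => ?_⟩
  · simp only [smul_apply, smul_eq_mul]
    exact mul_nonneg_of_nonpos_of_nonpos (inv_nonpos.2 hf1neg.le) (hpos g hg)
  · simp [hf1neg.ne]
  · have h1 := hq i
    simp only [q, map_sub, map_smul, smul_eq_mul] at h1
    simp only [smul_apply, smul_eq_mul]
    have h2 : f (h i) ≤ G i * f 1 := by linarith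
    rw [inv_mul_eq_div, le_div_iff_of_neg hf1neg]
    exact h2

lemma exists_ge_of_le_of_compact {K : Type*} [TopologicalSpace K] [CompactSpace K] [Nonempty K]
    (f : C(K, ℝ)) (a : ℝ) (h : ∀ B : ℝ, (∀ t, f t ≤ B) → a ≤ B) : ∃ t, a ≤ f t := by
  obtain ⟨t, -, ht⟩ := isCompact_univ.exists_isMaxOn Set.univ_nonempty f.continuous.continuousOn
  exact ⟨t, h _ fun s => ht (Set.mem_univ s)⟩

variable {K : Type*} [TopologicalSpace K] [CompactSpace K] {Y : Type*} [NormedAddCommGroup Y]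
  [NormedSpace ℝ Y]

lemma one_summing (T : C(K, ℝ) →L[ℝ] Y) (n : ℕ) (hT : RankLE T n) (D : ℝ) (hD0 : 0 ≤ D)
    (hD : ∀ (ι : Type) [Fintype ι] (y : ι → C(K, ℝ)), (∀ t, ∑ i, (y i t) ^ 2 ≤ 1) →
      ∑ i, ‖T (y i)‖ ^ 2 ≤ D ^ 2)
    {ι : Type} [Fintype ι] (x : ι → C(K, ℝ)) (hx : ∀ t, ∑ k, |x k t| ≤ 1) :
    ∑ k, ‖T (x k)‖ ≤ Real.sqrt n * D := by
  classical
  rcases isEmpty_or_nonempty ι with hι | hι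
  · simp; positivity
  let _ : TopologicalSpace ι := ⊥
  have : DiscreteTopology ι := ⟨rfl⟩
  let w : EuclideanSpace ℝ ι →ₗ[ℝ] Y := (T : C(K, ℝ) →ₗ[ℝ] Y) ∘ₗ synth x
  have hw : ∀ s, w s = T (synth x s) := fun s => rfl
  obtain ⟨L, hL0, hL1, hL⟩ := exists_pos_functional (K := ι) (ι := EuclideanSpace ℝ ι)
    (fun s => ‖w s‖ ^ 2) (fun s => ⟨fun k => D ^ 2 * (s k) ^ 2, continuous_of_discreteTopology⟩) (by
      intro S c hc
      let F : C(ι, ℝ) := ⟨fun k => ∑ s ∈ S, c s * (D ^ 2 * (s k) ^ 2), continuous_of_discreteTopology⟩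
      obtain ⟨k0, hk0⟩ := Finite.exists_max (fun k => ∑ s ∈ S, c s * (s k) ^ 2)
      refine ⟨k0, ?_⟩
      have key : ∀ A : ℝ, 0 < A → (∀ k, ∑ s ∈ S, c s * (s k) ^ 2 ≤ A) →
          ∑ s ∈ S, c s * ‖w s‖ ^ 2 ≤ D ^ 2 * A := by
        intro A hA hAk
        have h1 := hD S (fun s => Real.sqrt (c s.1 / A) • synth x s.1) (fun t => by
          have h2 : ∀ s : EuclideanSpace ℝ ι, (∑ k, s k * x k t) ^ 2 ≤ ∑ k, (s k) ^ 2 * |x k t| := by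
            intro s
            refine (Finset.sum_sq_le_sum_mul_sum_of_sq_le_mul Finset.univ
              (f := fun k => (s k) ^ 2 * |x k t|) (g := fun k => |x k t|)
              (fun k _ => by positivity) (fun k _ => by positivity) (fun k _ => le_of_eq ?_)).trans ?_
            · rw [mul_pow, mul_assoc, ← sq, sq_abs]
            · exact mul_le_of_le_one_right (Finset.sum_nonneg fun k _ => by positivity) (hx t)
          calc ∑ s : S, ((Real.sqrt (c s.1 / A) • synth x s.1) t) ^ 2
              = ∑ s : S, c s.1 / A * (∑ k, s.1 k * x k t) ^ 2 := by
                refine Finset.sum_congr rfl fun s _ => ?_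
                simp only [ContinuousMap.smul_apply, smul_eq_mul, mul_pow,
                  Real.sq_sqrt (div_nonneg (hc s.1) hA.le)]
                simp [synth]
            _ = ∑ s ∈ S, c s / A * (∑ k, s k * x k t) ^ 2 :=
                Finset.sum_coe_sort S (fun s => c s / A * (∑ k, s k * x k t) ^ 2)
            _ ≤ ∑ s ∈ S, c s / A * ∑ k, (s k) ^ 2 * |x k t| :=
                Finset.sum_le_sum fun s _ => mul_le_mul_of_nonneg_left (h2 s) (div_nonneg (hc s) hA.le)
            _ = ∑ k, |x k t| * ((∑ s ∈ S, c s * (s k) ^ 2) / A) := by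
                simp only [Finset.mul_sum, Finset.sum_div]
                rw [Finset.sum_comm]
                refine Finset.sum_congr rfl fun k _ => Finset.sum_congr rfl fun s _ => ?_
                ring
            _ ≤ ∑ k, |x k t| * 1 := by
                refine Finset.sum_le_sum fun k _ => mul_le_mul_of_nonneg_left ?_ (abs_nonneg _)
                rw [div_le_one hA]; exact hAk k
            _ ≤ 1 := by simpa using hx t)
        have h3 : ∑ s : S, ‖T (Real.sqrt (c s.1 / A) • synth x s.1)‖ ^ 2
            = (∑ s ∈ S, c s * ‖w s‖ ^ 2) / A := by
          rw [Finset.sum_div, ← Finset.sum_coe_sort S (fun s => c s * ‖w s‖ ^ 2 / A)]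
          refine Finset.sum_congr rfl fun s _ => ?_
          rw [map_smul, norm_smul, mul_pow, Real.norm_eq_abs, sq_abs,
            Real.sq_sqrt (div_nonneg (hc s.1) hA.le), hw]
          ring
        rw [h3, div_le_iff₀ hA] at h1
        exact h1
      have hA0 : 0 ≤ ∑ s ∈ S, c s * (s k0) ^ 2 :=
        Finset.sum_nonneg fun s _ => mul_nonneg (hc s) (sq_nonneg _)
      have h4 : ∑ s ∈ S, c s * (D ^ 2 * (s k0) ^ 2) = D ^ 2 * ∑ s ∈ S, c s * (s k0) ^ 2 := by
        rw [Finset.mul_sum]; exact Finset.sum_congr rfl fun s _ => by ring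
      simp only [ContinuousMap.coe_mk]
      rw [h4]
      refine le_of_forall_pos_le_add fun ε hε => ?_
      refine (key (∑ s ∈ S, c s * (s k0) ^ 2 + ε / (D ^ 2 + 1)) (by positivity)
        (fun k => (hk0 k).trans (by simp only [le_add_iff_nonneg_right]; positivity))).trans ?_
      rw [mul_add]
      gcongr
      rw [mul_div_assoc', div_le_iff₀ (by positivity)]
      nlinarith)
  let e : ι → C(ι, ℝ) := fun k => ⟨Pi.single k 1, continuous_of_discreteTopology⟩
  let μ : ι → ℝ := fun k => L (e k)
  have hLsum : ∀ f : C(ι, ℝ), L f = ∑ k, f k * μ k := by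
    intro f
    have : f = ∑ k, f k • e k := by
      ext j
      rw [ContinuousMap.sum_apply]
      simp [e, Pi.single_apply]
    conv_lhs => rw [this]
    simp [μ]
  have hμ0 : ∀ k, 0 ≤ μ k := fun k => hL0 _ fun j => by
    simp only [e, ContinuousMap.coe_mk, Pi.single_apply]; split_ifs <;> norm_num
  have hμ1 : ∑ k, μ k = 1 := by
    rw [← hL1, hLsum]; simp
  have hws : ∀ s, ‖w s‖ ^ 2 ≤ D ^ 2 * ∑ k, (s k) ^ 2 * μ k := by
    intro s
    refine (hL s).trans_eq ?_
    rw [hLsum, Finset.mul_sum]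
    exact Finset.sum_congr rfl fun k _ => by simp [mul_assoc]
  let x' : ι → C(K, ℝ) := fun k => (Real.sqrt (μ k))⁻¹ • x k
  have h5 := sum_sq_le_rank ((T : C(K, ℝ) →ₗ[ℝ] Y) ∘ₗ synth x') n (finrank_comp_le T n hT _) (D ^ 2)
    (fun a => by
      have h6 : synth x' a = synth x (WithLp.toLp 2 fun k => a k * (Real.sqrt (μ k))⁻¹) := by
        simp [synth, x', smul_smul]
      rw [LinearMap.comp_apply, h6]
      refine (hws _).trans ?_
      gcongr
      rw [EuclideanSpace.real_norm_sq_eq]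
      refine Finset.sum_le_sum fun k _ => ?_
      simp only [mul_pow, inv_pow, Real.sq_sqrt (hμ0 k)]
      rw [mul_assoc]
      refine mul_le_of_le_one_right (sq_nonneg _) ?_
      rcases (hμ0 k).eq_or_lt with h | h
      · simp [← h]
      · rw [inv_mul_cancel₀ h.ne']) (sq_nonneg _)
  simp only [LinearMap.comp_apply, synth_single] at h5
  have h7 : ∀ k, ‖T (x k)‖ = Real.sqrt (μ k) * ‖T (x' k)‖ := by
    intro k
    simp only [x', map_smul, norm_smul, norm_inv, Real.norm_eq_abs, abs_of_nonneg (Real.sqrt_nonneg _)]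
    rcases (hμ0 k).eq_or_lt with h | h
    · have h8 := hws (EuclideanSpace.single k 1)
      rw [hw, synth_single] at h8
      have h9 : ∑ j, (EuclideanSpace.single k (1:ℝ) j) ^ 2 * μ j = μ k := by
        rw [Finset.sum_eq_single k]
        · simp
        · intro j _ hj; simp [hj]
        · simp
      rw [h9, ← h, mul_zero] at h8
      have : ‖T (x k)‖ = 0 := by
        have := le_antisymm h8 (sq_nonneg _)
        simpa using this
      rw [this]; simp
    · rw [mul_inv_cancel_left₀ (Real.sqrt_pos.2 h).ne']
  simp only [h7]
  refine (Real.sum_mul_le_sqrt_mul_sqrt _ _ _).trans ?_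
  simp only [Real.sq_sqrt (hμ0 _), hμ1, Real.sqrt_one, one_mul]
  rw [show Real.sqrt n * D = Real.sqrt (n * D ^ 2) by
    rw [Real.sqrt_mul (Nat.cast_nonneg n), Real.sqrt_sq hD0]]
  exact Real.sqrt_le_sqrt h5

end CK2


section CK3
variable {K : Type*} [TopologicalSpace K] [CompactSpace K] {Y : Type*} [NormedAddCommGroup Y]
  [NormedSpace ℝ Y]

lemma exists_pos_functional' [Nonempty K] {ι : Type*} [Nonempty ι] (G : ι → ℝ) (h : ι → C(K, ℝ))
    (h0 : ∀ i t, 0 ≤ h i t) (M : ℝ) (hM : 0 ≤ M)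
    (H : ∀ (s : Finset ι) (c : ι → ℝ), (∀ i, 0 ≤ c i) → ∀ A : ℝ, 0 < A →
      (∀ t, ∑ i ∈ s, c i * h i t ≤ A) → ∑ i ∈ s, c i * G i ≤ M * A) :
    ∃ L : C(K, ℝ) →L[ℝ] ℝ, (∀ f : C(K, ℝ), (∀ t, 0 ≤ f t) → 0 ≤ L f) ∧ L 1 = 1 ∧
      ∀ i, G i ≤ M * L (h i) := by
  obtain ⟨L, hL0, hL1, hL⟩ := exists_pos_functional G (fun i => M • h i) (by
    intro s c hc
    obtain ⟨t, -, ht⟩ := isCompact_univ.exists_isMaxOn Set.univ_nonempty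
      (f := fun t => ∑ i ∈ s, c i * h i t) (by fun_prop)
    refine ⟨t, ?_⟩
    have h4 : ∑ i ∈ s, c i * (M • h i) t = M * ∑ i ∈ s, c i * h i t := by
      rw [Finset.mul_sum]; exact Finset.sum_congr rfl fun i _ => by simp; ring
    rw [h4]
    have hA0 : 0 ≤ ∑ i ∈ s, c i * h i t := Finset.sum_nonneg fun i _ => mul_nonneg (hc i) (h0 i t)
    refine le_of_forall_pos_le_add fun ε hε => ?_
    refine (H s c hc (∑ i ∈ s, c i * h i t + ε / (M + 1)) (by positivity)
      (fun k => (ht (Set.mem_univ k)).trans (by simp only [le_add_iff_nonneg_right]; positivity))).trans ?_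
    rw [mul_add]
    gcongr
    rw [mul_div_assoc', div_le_iff₀ (by positivity)]
    nlinarith)
  refine ⟨L, hL0, hL1, fun i => ?_⟩
  simpa using hL i

lemma young' {p a c : ℝ} (hp : 1 < p) (ha : 0 ≤ a) (hc : 0 ≤ c) :
    p * (a ^ (p - 1) * c) ≤ (p - 1) * a ^ p + c ^ p := by
  have hpq : (Real.conjExponent p).HolderConjugate p := (Real.HolderConjugate.conjExponent hp).symm
  have h := Real.young_inequality_of_nonneg (Real.rpow_nonneg ha (p - 1)) hc hpq
  have hp0 : p ≠ 0 := by linarith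
  have hp1 : p - 1 ≠ 0 := by linarith
  have e : (a ^ (p - 1)) ^ Real.conjExponent p = a ^ p := by
    rw [← Real.rpow_mul ha, Real.conjExponent]
    congr 1
    field_simp
  rw [e, Real.conjExponent] at h
  have := mul_le_mul_of_nonneg_left h (by linarith : 0 ≤ p)
  refine this.trans_eq ?_
  field_simp

lemma tangent {p a b c : ℝ} (hp : 1 < p) (ha : 0 ≤ a) (hc : 0 ≤ c) (h : a - b ≤ c) :
    a ^ p - p * (a ^ (p - 1) * b) ≤ c ^ p := by
  have h1 := young' hp ha hc
  have h2 : a ^ (p - 1) * (a - b) ≤ a ^ (p - 1) * c :=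
    mul_le_mul_of_nonneg_left h (Real.rpow_nonneg ha _)
  have h3 : a ^ (p - 1) * a = a ^ p := by
    rcases ha.eq_or_lt with rfl | ha
    · rw [mul_zero, Real.zero_rpow (by linarith)]
    · rw [Real.rpow_sub_one ha.ne', div_mul_cancel₀ _ ha.ne']
  nlinarith

lemma pisier (T : C(K, ℝ) →L[ℝ] Y) {p : ℝ} (hp : 1 < p) (B : ℝ)
    (hB : ∀ (N : ℕ) (x : Fin N → C(K, ℝ)), (∀ t, ∑ k, |x k t| ≤ 1) → ∑ k, ‖T (x k)‖ ^ p ≤ B)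
    {ι : Type*} (s : Finset ι) (f : ι → C(K, ℝ)) (hf0 : ∀ i t, 0 ≤ f i t) (hf1 : ∀ i t, f i t ≤ 1)
    (c : ι → ℝ) (hc : ∀ i, 0 ≤ c i) (A : ℝ) (hA : 0 < A) (hs : ∀ t, ∑ i ∈ s, c i * f i t ≤ A) :
    ∑ i ∈ s, c i * ‖T (f i)‖ ^ p ≤ p * B * A := by
  have hp0 : 0 < p := by linarith
  let S : Set ℝ := {r | ∃ (N : ℕ) (x : Fin N → C(K, ℝ)), (∀ t, ∑ k, |x k t| ≤ 1) ∧
    r = ∑ k, ‖T (x k)‖ ^ p}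
  have hSb : BddAbove S := ⟨B, by rintro _ ⟨N, x, hx, rfl⟩; exact hB N x hx⟩
  have hSne : S.Nonempty := ⟨0, 0, Fin.elim0, by simp, by simp⟩
  obtain ⟨B', hB'⟩ : ∃ B', B' = sSup S := ⟨_, rfl⟩
  have hB'B : B' ≤ B := by
    rw [hB']; exact csSup_le hSne (by rintro _ ⟨N, x, hx, rfl⟩; exact hB N x hx)
  have hup : ∀ (N : ℕ) (x : Fin N → C(K, ℝ)), (∀ t, ∑ k, |x k t| ≤ 1) → ∑ k, ‖T (x k)‖ ^ p ≤ B' :=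
    fun N x hx => by rw [hB']; exact le_csSup hSb ⟨N, x, hx, rfl⟩
  suffices h : ∑ i ∈ s, c i * ‖T (f i)‖ ^ p ≤ p * B' * A from
    h.trans (by gcongr)
  have hC0 : 0 ≤ ∑ i ∈ s, c i := Finset.sum_nonneg fun i _ => hc i
  refine le_of_forall_pos_le_add fun ε hε => ?_
  obtain ⟨_, ⟨N, x, hx, rfl⟩, hlt⟩ := exists_lt_of_lt_csSup hSne
    (show B' - ε / (∑ i ∈ s, c i + 1) < sSup S by rw [← hB']; linarith [show 0 < ε / (∑ i ∈ s, c i + 1) by positivity])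
  choose y hy1 hy2 using fun i => exists_dual_vector'' ℝ (T (x i))
  let lam : C(K, ℝ) →ₗ[ℝ] ℝ := ∑ i, (‖T (x i)‖ ^ (p - 1)) •
    ((y i : Y →ₗ[ℝ] ℝ) ∘ₗ (T : C(K, ℝ) →ₗ[ℝ] Y) ∘ₗ LinearMap.mulLeft ℝ (x i))
  have hlam : ∀ g, lam g = ∑ i, ‖T (x i)‖ ^ (p - 1) * y i (T (x i * g)) := by
    intro g; simp [lam]
  have hlamle : ∀ g : C(K, ℝ), (∀ t, |g t| ≤ 1) → lam g ≤ B' := by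
    intro g hg
    have h1 : ∑ i, ‖T (x i * g)‖ ^ p ≤ B' := hup N _ fun t => by
      refine le_trans (Finset.sum_le_sum fun k _ => ?_) (hx t)
      rw [ContinuousMap.mul_apply, abs_mul]
      exact mul_le_of_le_one_right (abs_nonneg _) (hg t)
    have h2 := hup N x hx
    have h3 : p * lam g ≤ ∑ i, ((p - 1) * ‖T (x i)‖ ^ p + ‖T (x i * g)‖ ^ p) := by
      rw [hlam, Finset.mul_sum]
      refine Finset.sum_le_sum fun i _ => le_trans ?_ (young' hp (norm_nonneg _) (norm_nonneg _))
      gcongr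
      refine (le_abs_self _).trans (((y i).le_opNorm _).trans ?_)
      exact mul_le_of_le_one_left (norm_nonneg _) (hy1 i)
    rw [Finset.sum_add_distrib, ← Finset.mul_sum] at h3
    have h4 : (p - 1) * ∑ i, ‖T (x i)‖ ^ p ≤ (p - 1) * B' := by gcongr
    nlinarith
  have hone : ∀ i, ‖T (f i)‖ ^ p ≤ ε / (∑ i ∈ s, c i + 1) + p * lam (f i) := by
    intro i
    have h1 := hup (N + 1) (Fin.cons (f i) fun k => x k * (1 - f i)) fun t => by
      rw [Fin.sum_univ_succ]
      simp only [Fin.cons_zero, Fin.cons_succ, ContinuousMap.mul_apply, abs_mul,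
        ContinuousMap.sub_apply, ContinuousMap.one_apply, ← Finset.sum_mul]
      rw [abs_of_nonneg (hf0 i t), abs_of_nonneg (sub_nonneg.2 (hf1 i t))]
      have := mul_le_mul_of_nonneg_right (hx t) (sub_nonneg.2 (hf1 i t))
      linarith
    rw [Fin.sum_univ_succ] at h1
    simp only [Fin.cons_zero, Fin.cons_succ] at h1
    have h2 : ∑ k, ‖T (x k)‖ ^ p - p * lam (f i) ≤ ∑ k, ‖T (x k * (1 - f i))‖ ^ p := by
      rw [hlam, Finset.mul_sum, ← Finset.sum_sub_distrib]
      refine Finset.sum_le_sum fun k _ => tangent hp (norm_nonneg _) (norm_nonneg _) ?_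
      have h3 : y k (T (x k * (1 - f i))) = ‖T (x k)‖ - y k (T (x k * f i)) := by
        rw [mul_sub, mul_one, map_sub, map_sub, hy2]; simp
      rw [← h3]
      refine (le_abs_self _).trans (((y k).le_opNorm _).trans ?_)
      exact mul_le_of_le_one_left (norm_nonneg _) (hy1 k)
    linarith
  have hF : lam (∑ i ∈ s, c i • f i) ≤ B' * A := by
    have h1 := hlamle (A⁻¹ • ∑ i ∈ s, c i • f i) fun t => by
      have e : (A⁻¹ • ∑ i ∈ s, c i • f i) t = A⁻¹ * ∑ i ∈ s, c i * f i t := by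
        simp
      rw [e, abs_of_nonneg (mul_nonneg (inv_nonneg.2 hA.le)
        (Finset.sum_nonneg fun i _ => mul_nonneg (hc i) (hf0 i t))), inv_mul_le_iff₀ hA, mul_one]
      exact hs t
    rw [map_smul, smul_eq_mul, inv_mul_le_iff₀ hA] at h1
    linarith
  calc ∑ i ∈ s, c i * ‖T (f i)‖ ^ p
      ≤ ∑ i ∈ s, c i * (ε / (∑ i ∈ s, c i + 1) + p * lam (f i)) :=
        Finset.sum_le_sum fun i _ => mul_le_mul_of_nonneg_left (hone i) (hc i)
    _ = (∑ i ∈ s, c i) * (ε / (∑ i ∈ s, c i + 1)) + p * lam (∑ i ∈ s, c i • f i) := by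
        rw [map_sum]
        simp only [mul_add, Finset.sum_add_distrib, map_smul, smul_eq_mul]
        rw [Finset.sum_mul, Finset.mul_sum]
        congr 1
        exact Finset.sum_congr rfl fun i _ => by ring
    _ ≤ ε + p * (B' * A) := by
        gcongr
        rw [mul_div_assoc', div_le_iff₀ (by positivity)]
        nlinarith
    _ = p * B' * A + ε := by ring

lemma layer_pointwise {p : ℝ} (hp : 1 < p) (y : ℝ) (hy : 0 ≤ y) (J : ℕ) :
    ∑ j ∈ Finset.range J, ((2:ℝ) ^ j) ^ (p - 1) * (min y (2 ^ (j + 1)) - min y (2 ^ j)) ≤ y ^ p := by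
  have h1 : ∀ j ∈ Finset.range J, ((2:ℝ) ^ j) ^ (p - 1) * (min y (2 ^ (j + 1)) - min y (2 ^ j)) ≤
      y ^ (p - 1) * (min y (2 ^ (j + 1)) - min y (2 ^ j)) := by
    intro j _
    rcases le_total y (2 ^ j) with h | h
    · have h2 : y ≤ 2 ^ (j + 1) := h.trans (by gcongr <;> norm_num)
      rw [min_eq_left h, min_eq_left h2]; simp
    · have h3 : min y ((2:ℝ) ^ j) ≤ min y (2 ^ (j + 1)) := by gcongr <;> norm_num
      gcongr
  refine (Finset.sum_le_sum h1).trans ?_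
  rw [← Finset.mul_sum, Finset.sum_range_sub (fun j => min y ((2:ℝ) ^ j))]
  have h3 : y ^ (p - 1) * y = y ^ p := by
    rcases hy.eq_or_lt with rfl | ha
    · rw [mul_zero, Real.zero_rpow (by linarith)]
    · rw [Real.rpow_sub_one ha.ne', div_mul_cancel₀ _ ha.ne']
  rw [← h3]
  gcongr
  have := min_le_left y ((2:ℝ) ^ J)
  have : 0 ≤ min y ((2:ℝ) ^ 0) := le_min hy (by norm_num)
  linarith

lemma top_pointwise {p : ℝ} (hp : 1 < p) (y : ℝ) (hy : 0 ≤ y) (J : ℕ) :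
    ((2:ℝ) ^ J) ^ (p - 1) * (y - min y (2 ^ J)) ≤ y ^ p := by
  have h3 : y ^ (p - 1) * y = y ^ p := by
    rcases hy.eq_or_lt with rfl | ha
    · rw [mul_zero, Real.zero_rpow (by linarith)]
    · rw [Real.rpow_sub_one ha.ne', div_mul_cancel₀ _ ha.ne']
  rcases le_total y (2 ^ J) with h | h
  · rw [min_eq_left h]; simp; positivity
  · rw [← h3, min_eq_right h]
    have : (0:ℝ) < 2 ^ J := by positivity
    gcongr
    · linarith

end CK3


section CK4
variable {K : Type*} [TopologicalSpace K] [CompactSpace K] {Y : Type*} [NormedAddCommGroup Y]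
  [NormedSpace ℝ Y]

lemma add_three_rpow {p a b c : ℝ} (hp : 1 < p) (ha : 0 ≤ a) (hb : 0 ≤ b) (hc : 0 ≤ c) :
    (a + b + c) ^ p ≤ 3 ^ (p - 1) * (a ^ p + b ^ p + c ^ p) := by
  have h := Real.rpow_sum_le_const_mul_sum_rpow_of_nonneg (s := (Finset.univ : Finset (Fin 3)))
    (f := ![a, b, c]) hp.le (fun i _ => by fin_cases i <;> simpa)
  simpa [Fin.sum_univ_three] using h

lemma add_two_rpow {p a b : ℝ} (hp : 1 < p) (ha : 0 ≤ a) (hb : 0 ≤ b) :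
    (a + b) ^ p ≤ 2 ^ (p - 1) * (a ^ p + b ^ p) := by
  have h := Real.rpow_sum_le_const_mul_sum_rpow_of_nonneg (s := (Finset.univ : Finset (Fin 2)))
    (f := ![a, b]) hp.le (fun i _ => by fin_cases i <;> simpa)
  simpa [Fin.sum_univ_two] using h

/-- `|x|^p` as a continuous function. -/
def absPow (p : ℝ) (hp : 1 < p) (x : C(K, ℝ)) : C(K, ℝ) :=
  ⟨fun t => |x t| ^ p, (x.continuous.abs).rpow_const fun _ => Or.inr (by linarith)⟩

lemma pos_mono (L : C(K, ℝ) →L[ℝ] ℝ) (hL0 : ∀ f : C(K, ℝ), (∀ t, 0 ≤ f t) → 0 ≤ L f)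
    (f g : C(K, ℝ)) (h : ∀ t, f t ≤ g t) : L f ≤ L g := by
  have := hL0 (g - f) fun t => by simpa using h t
  rw [map_sub] at this; linarith

lemma layer_nonneg (T : C(K, ℝ) →L[ℝ] Y) {p : ℝ} (hp : 1 < p)
    (L : C(K, ℝ) →L[ℝ] ℝ) (hL0 : ∀ f : C(K, ℝ), (∀ t, 0 ≤ f t) → 0 ≤ L f) (hL1 : L 1 ≤ 2)
    (E : ℝ) (hE : 0 ≤ E)
    (h1 : ∀ f : C(K, ℝ), (∀ t, 0 ≤ f t) → (∀ t, f t ≤ 1) → ‖T f‖ ^ p ≤ E * L f)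
    (M1 M2 : ℝ) (hM1 : 0 ≤ M1) (hM2 : 0 ≤ M2)
    (h2 : ∀ f : C(K, ℝ), (∀ t, 0 ≤ f t) → ‖T f‖ ≤ M1 * L f)
    (J : ℕ) (hJ : M1 ≤ M2 * ((2:ℝ) ^ J) ^ (p - 1))
    (x : C(K, ℝ)) (hx : ∀ t, 0 ≤ x t) (hLx : L (absPow p hp x) ≤ 1) :
    ‖T x‖ ^ p ≤ 3 ^ (p - 1) * (E * 2 + (J : ℝ) ^ (p - 1) * E + M2 ^ p) := by
  have hp0 : 0 < p := by linarith
  let cl : ℕ → C(K, ℝ) := fun j => ⟨fun t => min (x t) (2 ^ j), by fun_prop⟩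
  have hcl : ∀ j t, cl j t = min (x t) (2 ^ j) := fun j t => rfl
  have hdec : x = cl 0 + ∑ j ∈ Finset.range J, (cl (j + 1) - cl j) + (x - cl J) := by
    rw [Finset.sum_range_sub]; abel
  have hmon : ∀ j t, cl j t ≤ cl (j + 1) t := fun j t => by
    rw [hcl, hcl]; gcongr <;> norm_num
  have hd2 : ∀ j t, cl (j + 1) t - cl j t ≤ 2 ^ j := fun j t => by
    rw [hcl, hcl]
    have : (2:ℝ) ^ (j + 1) = 2 ^ j + 2 ^ j := by ring
    rcases le_total (x t) (2 ^ j) with h | h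
    · rw [min_eq_left h]; have := min_le_left (x t) ((2:ℝ) ^ (j + 1)); have : (0:ℝ) < 2 ^ j := by positivity
      linarith
    · rw [min_eq_right h]; have := min_le_right (x t) ((2:ℝ) ^ (j + 1)); linarith
  have hA : ‖T (cl 0)‖ ^ p ≤ E * 2 := by
    refine (h1 _ (fun t => le_min (hx t) (by norm_num)) (fun t => ?_)).trans ?_
    · rw [hcl]; exact (min_le_right _ _).trans (by norm_num)
    · gcongr
      refine (pos_mono L hL0 _ 1 fun t => ?_).trans hL1
      rw [hcl]; exact (min_le_right _ _).trans (by norm_num)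
  have hBj : ∀ j, ‖T (cl (j + 1) - cl j)‖ ^ p ≤ E * L ((((2:ℝ) ^ j) ^ (p - 1)) • (cl (j + 1) - cl j)) := by
    intro j
    have h2j : (0:ℝ) < 2 ^ j := by positivity
    have h := h1 (((2:ℝ) ^ j)⁻¹ • (cl (j + 1) - cl j)) (fun t => by
      simp only [ContinuousMap.smul_apply, ContinuousMap.sub_apply, smul_eq_mul]
      exact mul_nonneg (by positivity) (sub_nonneg.2 (hmon j t))) (fun t => by
      simp only [ContinuousMap.smul_apply, ContinuousMap.sub_apply, smul_eq_mul]
      rw [inv_mul_le_iff₀ h2j, mul_one]; exact hd2 j t)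
    rw [map_smul, map_smul, norm_smul, Real.norm_eq_abs, abs_of_pos (inv_pos.2 h2j),
      Real.mul_rpow (by positivity) (norm_nonneg _), Real.inv_rpow h2j.le,
      inv_mul_le_iff₀ (Real.rpow_pos_of_pos h2j _)] at h
    refine h.trans_eq ?_
    rw [map_smul, Real.rpow_sub_one h2j.ne', smul_eq_mul, smul_eq_mul]
    field_simp
  have hB : (∑ j ∈ Finset.range J, ‖T (cl (j + 1) - cl j)‖) ^ p ≤ (J : ℝ) ^ (p - 1) * E := by
    have h := Real.rpow_sum_le_const_mul_sum_rpow_of_nonneg (s := Finset.range J)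
      (f := fun j => ‖T (cl (j + 1) - cl j)‖) hp.le (fun i _ => norm_nonneg _)
    rw [Finset.card_range] at h
    refine h.trans ?_
    gcongr
    refine (Finset.sum_le_sum fun j _ => hBj j).trans ?_
    rw [← Finset.mul_sum, ← map_sum]
    refine mul_le_of_le_one_right hE (le_trans (pos_mono L hL0 _ _ fun t => ?_) hLx)
    have := layer_pointwise hp (x t) (hx t) J
    rw [ContinuousMap.sum_apply]
    simpa [hcl, absPow, abs_of_nonneg (hx t)] using this
  have hC : ‖T (x - cl J)‖ ^ p ≤ M2 ^ p := by
    refine Real.rpow_le_rpow (norm_nonneg _) ?_ hp0.le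
    have hnn : ∀ t, 0 ≤ (x - cl J) t := fun t => by
      rw [ContinuousMap.sub_apply, hcl]; linarith [min_le_left (x t) ((2:ℝ) ^ J)]
    have hLn := hL0 _ hnn
    refine (h2 _ hnn).trans ?_
    have h3 : L ((((2:ℝ) ^ J) ^ (p - 1)) • (x - cl J)) ≤ 1 := by
      refine le_trans (pos_mono L hL0 _ _ fun t => ?_) hLx
      have := top_pointwise hp (x t) (hx t) J
      simpa [hcl, absPow, abs_of_nonneg (hx t)] using this
    rw [map_smul, smul_eq_mul] at h3
    calc M1 * L (x - cl J) ≤ M2 * ((2:ℝ) ^ J) ^ (p - 1) * L (x - cl J) := by gcongr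
      _ = M2 * (((2:ℝ) ^ J) ^ (p - 1) * L (x - cl J)) := by ring
      _ ≤ M2 := mul_le_of_le_one_right hM2 h3
  have hn : ‖T x‖ ≤ ‖T (cl 0)‖ + ∑ j ∈ Finset.range J, ‖T (cl (j + 1) - cl j)‖ + ‖T (x - cl J)‖ := by
    conv_lhs => rw [hdec]
    rw [map_add, map_add, map_sum]
    refine (norm_add_le _ _).trans (add_le_add_left ((norm_add_le _ _).trans (add_le_add_right (norm_sum_le _ _) _)) _)
  refine (Real.rpow_le_rpow (norm_nonneg _) hn hp0.le).trans ?_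
  refine (add_three_rpow hp (norm_nonneg _) (Finset.sum_nonneg fun _ _ => norm_nonneg _) (norm_nonneg _)).trans ?_
  gcongr

lemma core (p : ℝ) (hp : 1 < p) (C0 : ℝ) (hC0 : 0 ≤ C0) : ∃ C : ℝ, 0 < C ∧
    ∀ (K : Type*) [TopologicalSpace K] [CompactSpace K] [Nonempty K] (Y : Type*)
      [NormedAddCommGroup Y] [NormedSpace ℝ Y] (T : C(K, ℝ) →L[ℝ] Y) (n : ℕ) (_ : 1 ≤ n) (P : ℝ)
      (_ : 0 ≤ P)
      (_ : ∀ (N : ℕ) (x : Fin N → C(K, ℝ)), (∀ t, ∑ k, |x k t| ≤ 1) →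
        ∑ k, ‖T (x k)‖ ≤ 2 * n * P)
      (_ : ∀ (N : ℕ) (x : Fin N → C(K, ℝ)), (∀ t, ∑ k, |x k t| ≤ 1) →
        ∑ k, ‖T (x k)‖ ^ p ≤ C0 * P ^ p) (N : ℕ) (x : Fin N → C(K, ℝ)),
      (∀ t, ∑ k, |x k t| ^ p ≤ 1) →
      ∑ k, ‖T (x k)‖ ^ p ≤ C * (1 + Real.log n) ^ (p - 1) * P ^ p := by
  have hp0 : 0 < p := by linarith
  have hp1 : 0 < p - 1 := by linarith
  have hlog2 : 0 < Real.log 2 := Real.log_pos (by norm_num)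
  obtain ⟨κ, hκ⟩ : ∃ κ : ℝ, κ = 1 + 1 / (Real.log 2 * (p - 1)) := ⟨_, rfl⟩
  have hκ0 : 0 < κ := by rw [hκ]; positivity
  obtain ⟨Q, hQ⟩ : ∃ Q : ℝ, Q = 3 ^ (p - 1) * (p * C0 * 2 + κ ^ (p - 1) * (p * C0) + 2 ^ p) := ⟨_, rfl⟩
  have hQ0 : 0 < Q := by rw [hQ]; positivity
  refine ⟨3 * (2 ^ p * Q), by positivity, ?_⟩
  intro K _ _ _ Y _ _ T n hn P hP H1 H2 N x hx
  have hn' : (1:ℝ) ≤ n := by exact_mod_cast hn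
  have hlogn : 0 ≤ Real.log n := Real.log_nonneg hn'
  obtain ⟨l, hl⟩ : ∃ l : ℝ, l = 1 + Real.log n := ⟨_, rfl⟩
  have hl1 : 1 ≤ l := by rw [hl]; linarith
  rw [← hl]
  -- functionals
  have hne : Nonempty {f : C(K, ℝ) // (∀ t, 0 ≤ f t) ∧ ∀ t, f t ≤ 1} := ⟨⟨0, by simp, by simp⟩⟩
  obtain ⟨L1, hL1p, hL11, hL1⟩ := exists_pos_functional' (K := K)
    (ι := {f : C(K, ℝ) // (∀ t, 0 ≤ f t) ∧ ∀ t, f t ≤ 1}) (h := fun f => f.1)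
    (fun f => ‖T f.1‖ ^ p) (fun f => f.2.1) (p * (C0 * P ^ p)) (by positivity)
    (fun s c hc A hA hs => pisier T hp (C0 * P ^ p) H2 s (fun f => f.1) (fun f => f.2.1)
      (fun f => f.2.2) c hc A hA hs)
  obtain ⟨L2, hL2p, hL21, hL2⟩ := exists_pos_functional' (K := K)
    (ι := C(K, ℝ)) (h := fun f => |f|) (fun f => ‖T f‖) (fun f t => by simp) (2 * n * P) (by positivity)
    (fun s c hc A hA hs => by
      have h := H1 s.card (fun k => (c (s.equivFin.symm k) / A) • (s.equivFin.symm k).1) (fun t => by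
        rw [Equiv.sum_comp s.equivFin.symm (fun f => |((c f.1 / A) • f.1) t|),
          Finset.sum_coe_sort s (fun f => |((c f / A) • f) t|)]
        have e : ∀ f ∈ s, |((c f / A) • f) t| = (c f * |f| t) / A := fun f _ => by
          simp only [ContinuousMap.smul_apply, smul_eq_mul, abs_mul, ContinuousMap.abs_apply,
            abs_of_nonneg (div_nonneg (hc f) hA.le)]
          ring
        rw [Finset.sum_congr rfl e, ← Finset.sum_div, div_le_one hA]
        exact hs t)
      rw [Equiv.sum_comp s.equivFin.symm (fun f => ‖T ((c f.1 / A) • f.1)‖),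
          Finset.sum_coe_sort s (fun f => ‖T ((c f / A) • f)‖)] at h
      have e : ∀ f ∈ s, ‖T ((c f / A) • f)‖ = (c f * ‖T f‖) / A := fun f _ => by
        rw [map_smul, norm_smul, Real.norm_eq_abs, abs_of_nonneg (div_nonneg (hc f) hA.le)]
        ring
      rw [Finset.sum_congr rfl e, ← Finset.sum_div, div_le_iff₀ hA] at h
      exact h)
  obtain ⟨L, hL⟩ : ∃ L : C(K, ℝ) →L[ℝ] ℝ, L = L1 + L2 := ⟨_, rfl⟩
  have hLa : ∀ f, L f = L1 f + L2 f := fun f => by rw [hL]; rfl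
  have hLp : ∀ f : C(K, ℝ), (∀ t, 0 ≤ f t) → 0 ≤ L f := fun f hf => by
    rw [hLa]; exact add_nonneg (hL1p f hf) (hL2p f hf)
  have hLone : L 1 ≤ 2 := by rw [hLa, hL11, hL21]; norm_num
  -- choice of J
  obtain ⟨J, hJ⟩ : ∃ J : ℕ, J = ⌈Real.log n / (Real.log 2 * (p - 1))⌉₊ := ⟨_, rfl⟩
  have hJ1 : (J : ℝ) ≤ κ * l := by
    have h := (Nat.ceil_lt_add_one (show 0 ≤ Real.log n / (Real.log 2 * (p - 1)) by positivity)).le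
    rw [← hJ] at h
    refine h.trans ?_
    rw [hκ, hl]
    have : 0 ≤ 1 / (Real.log 2 * (p - 1)) := by positivity
    have e : Real.log n / (Real.log 2 * (p - 1)) = 1 / (Real.log 2 * (p - 1)) * Real.log n := by ring
    rw [e]
    nlinarith
  have hJ2 : (n : ℝ) ≤ ((2:ℝ) ^ J) ^ (p - 1) := by
    have h := Nat.le_ceil (Real.log n / (Real.log 2 * (p - 1)))
    rw [← hJ, div_le_iff₀ (by positivity)] at h
    rw [← Real.log_le_log_iff (by linarith) (by positivity), Real.log_rpow (by positivity), Real.log_pow]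
    linarith
  have hPp : 0 ≤ P ^ p := Real.rpow_nonneg hP p
  have hlp : 1 ≤ l ^ (p - 1) := Real.one_le_rpow hl1 hp1.le
  have hpos : ∀ z : C(K, ℝ), (∀ t, 0 ≤ z t) → L (absPow p hp z) ≤ 1 →
      ‖T z‖ ^ p ≤ Q * l ^ (p - 1) * P ^ p := by
    intro z hz hLz
    refine (layer_nonneg T hp L hLp hLone (p * (C0 * P ^ p)) (by positivity) ?_ (2 * n * P) (2 * P)
      (by positivity) (by positivity) ?_ J ?_ z hz hLz).trans ?_
    · intro f hf0 hf1
      refine (hL1 ⟨f, hf0, hf1⟩).trans ?_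
      have := hL2p f hf0
      gcongr
      rw [hLa]; simp only; linarith
    · intro f hf0
      refine (hL2 f).trans ?_
      have e : |f| = f := by ext t; simp [abs_of_nonneg (hf0 t)]
      simp only [e]
      have := hL1p f hf0
      gcongr
      rw [hLa]; linarith
    · nlinarith
    · have e1 : (J : ℝ) ^ (p - 1) ≤ κ ^ (p - 1) * l ^ (p - 1) := by
        rw [← Real.mul_rpow hκ0.le (by linarith)]
        exact Real.rpow_le_rpow (Nat.cast_nonneg _) hJ1 hp1.le
      rw [Real.mul_rpow (by norm_num) hP]
      calc 3 ^ (p - 1) * (p * (C0 * P ^ p) * 2 + (J : ℝ) ^ (p - 1) * (p * (C0 * P ^ p)) + 2 ^ p * P ^ p)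
          ≤ 3 ^ (p - 1) * (p * (C0 * P ^ p) * 2 * l ^ (p - 1)
            + κ ^ (p - 1) * l ^ (p - 1) * (p * (C0 * P ^ p)) + 2 ^ p * P ^ p * l ^ (p - 1)) := by
            have q1 : p * (C0 * P ^ p) * 2 ≤ p * (C0 * P ^ p) * 2 * l ^ (p - 1) :=
              le_mul_of_one_le_right (by positivity) hlp
            have q2 : 2 ^ p * P ^ p ≤ 2 ^ p * P ^ p * l ^ (p - 1) :=
              le_mul_of_one_le_right (by positivity) hlp
            have q3 : (J : ℝ) ^ (p - 1) * (p * (C0 * P ^ p))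
                ≤ κ ^ (p - 1) * l ^ (p - 1) * (p * (C0 * P ^ p)) :=
              mul_le_mul_of_nonneg_right e1 (by positivity)
            exact mul_le_mul_of_nonneg_left (add_le_add (add_le_add q1 q3) q2) (by positivity)
        _ = Q * l ^ (p - 1) * P ^ p := by rw [hQ]; ring
  have hall : ∀ z : C(K, ℝ), L (absPow p hp z) ≤ 1 → ‖T z‖ ^ p ≤ 2 ^ p * Q * l ^ (p - 1) * P ^ p := by
    intro z hLz
    let z1 : C(K, ℝ) := ⟨fun t => max (z t) 0, by fun_prop⟩
    let z2 : C(K, ℝ) := ⟨fun t => max (-z t) 0, by fun_prop⟩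
    have hz : z = z1 - z2 := by
      ext t
      simp only [z1, z2, ContinuousMap.sub_apply, ContinuousMap.coe_mk]
      rcases le_total (z t) 0 with h | h
      · rw [max_eq_right h, max_eq_left (by linarith)]; ring
      · rw [max_eq_left h, max_eq_right (by linarith)]; ring
    have b1 := hpos z1 (fun t => le_max_right _ _) ((pos_mono L hLp _ _ fun t => by
      simp only [absPow, z1, ContinuousMap.coe_mk]
      refine Real.rpow_le_rpow (abs_nonneg _) ?_ hp0.le
      rw [abs_of_nonneg (le_max_right _ _)]
      exact max_le (le_abs_self _) (abs_nonneg _)).trans hLz)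
    have b2 := hpos z2 (fun t => le_max_right _ _) ((pos_mono L hLp _ _ fun t => by
      simp only [absPow, z2, ContinuousMap.coe_mk]
      refine Real.rpow_le_rpow (abs_nonneg _) ?_ hp0.le
      rw [abs_of_nonneg (le_max_right _ _)]
      exact max_le (neg_le_abs _) (abs_nonneg _)).trans hLz)
    have b3 : ‖T z‖ ≤ ‖T z1‖ + ‖T z2‖ := by
      conv_lhs => rw [hz]
      rw [map_sub]; exact norm_sub_le _ _
    refine (Real.rpow_le_rpow (norm_nonneg _) b3 hp0.le).trans ?_
    refine (add_two_rpow hp (norm_nonneg _) (norm_nonneg _)).trans ?_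
    calc (2:ℝ) ^ (p - 1) * (‖T z1‖ ^ p + ‖T z2‖ ^ p)
        ≤ 2 ^ (p - 1) * (Q * l ^ (p - 1) * P ^ p + Q * l ^ (p - 1) * P ^ p) := by gcongr
      _ = 2 ^ p * Q * l ^ (p - 1) * P ^ p := by
        rw [Real.rpow_sub_one (by norm_num)]; ring
  -- scaling
  have hscale : ∀ k, ‖T (x k)‖ ^ p ≤ 2 ^ p * Q * l ^ (p - 1) * P ^ p * (L (absPow p hp (x k)) + 1 / N) := by
    intro k
    have hN : (0:ℝ) < N := by exact_mod_cast (Nat.pos_of_ne_zero (by rintro rfl; exact k.elim0))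
    have hLk : 0 ≤ L (absPow p hp (x k)) := hLp _ fun t => Real.rpow_nonneg (abs_nonneg _) _
    obtain ⟨r, hr⟩ : ∃ r : ℝ, r = L (absPow p hp (x k)) + 1 / N := ⟨_, rfl⟩
    have hr0 : 0 < r := by rw [hr]; positivity
    obtain ⟨σ, hσ⟩ : ∃ σ : ℝ, σ = r ^ (1 / p) := ⟨_, rfl⟩
    have hσ0 : 0 < σ := by rw [hσ]; positivity
    have hσp : σ ^ p = r := by
      rw [hσ, ← Real.rpow_mul hr0.le, one_div_mul_cancel hp0.ne', Real.rpow_one]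
    have e : absPow p hp (σ⁻¹ • x k) = r⁻¹ • absPow p hp (x k) := by
      ext t
      simp only [absPow, ContinuousMap.coe_mk, ContinuousMap.smul_apply, smul_eq_mul, abs_mul,
        abs_of_pos (inv_pos.2 hσ0)]
      rw [Real.mul_rpow (by positivity) (abs_nonneg _), Real.inv_rpow hσ0.le, hσp]
    have h := hall (σ⁻¹ • x k) (by
      rw [e, map_smul, smul_eq_mul, inv_mul_le_iff₀ hr0, mul_one, hr]
      have : 0 < 1 / (N:ℝ) := by positivity
      linarith)
    rw [map_smul, norm_smul, Real.norm_eq_abs, abs_of_pos (inv_pos.2 hσ0),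
      Real.mul_rpow (by positivity) (norm_nonneg _), Real.inv_rpow hσ0.le, hσp,
      inv_mul_le_iff₀ hr0] at h
    rw [← hr]; linarith
  refine (Finset.sum_le_sum fun k _ => hscale k).trans ?_
  rw [← Finset.mul_sum]
  have hsum : ∑ k, (L (absPow p hp (x k)) + 1 / N) ≤ 3 := by
    rw [Finset.sum_add_distrib, ← map_sum]
    have a1 : L (∑ k, absPow p hp (x k)) ≤ L 1 := pos_mono L hLp _ _ fun t => by
      rw [ContinuousMap.sum_apply]; exact hx t
    have a2 : ∑ _k : Fin N, 1 / (N:ℝ) ≤ 1 := by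
      simp only [Finset.sum_const, Finset.card_univ, Fintype.card_fin, nsmul_eq_mul, one_div]
      exact mul_inv_le_one
    linarith
  calc _ ≤ 2 ^ p * Q * l ^ (p - 1) * P ^ p * 3 := by gcongr
    _ = _ := by ring

end CK4


section CK5
variable {K : Type*} [TopologicalSpace K] [CompactSpace K] {Y : Type*} [NormedAddCommGroup Y]
  [NormedSpace ℝ Y]

lemma eSum_eq {p : ℝ} (hp : 1 < p) {N : ℕ} (a : Fin N → ℝ) (ha : ∀ k, 0 ≤ a k) :
    eSum (ENNReal.ofReal p) (fun k => ENNReal.ofReal (a k)) =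
      ENNReal.ofReal ((∑ k, a k ^ p) ^ (1 / p)) := by
  have hp0 : 0 < p := by linarith
  rw [eSum, if_neg ENNReal.ofReal_ne_top, ENNReal.toReal_ofReal hp0.le,
    ← ENNReal.ofReal_rpow_of_nonneg (Finset.sum_nonneg fun k _ => Real.rpow_nonneg (ha k) _)
      (by positivity), ENNReal.ofReal_sum_of_nonneg fun k _ => Real.rpow_nonneg (ha k) _]
  congr 1
  exact Finset.sum_congr rfl fun k _ => ENNReal.ofReal_rpow_of_nonneg (ha k) hp0.le

lemma eSum_le_iff {p : ℝ} (hp : 1 < p) {N : ℕ} (a : Fin N → ℝ) (ha : ∀ k, 0 ≤ a k) (c : ℝ)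
    (hc : 0 ≤ c) :
    eSum (ENNReal.ofReal p) (fun k => ENNReal.ofReal (a k)) ≤ ENNReal.ofReal c ↔
      ∑ k, a k ^ p ≤ c ^ p := by
  rw [eSum_eq hp a ha, ENNReal.ofReal_le_ofReal_iff hc, one_div,
    Real.rpow_inv_le_iff_of_pos (Finset.sum_nonneg fun k _ => Real.rpow_nonneg (ha k) _) hc
      (by linarith)]

lemma weak_iff {p : ℝ} (hp : 1 < p) {N : ℕ} (x : Fin N → C(K, ℝ)) :
    weakLq (ENNReal.ofReal p) x ≤ 1 ↔ ∀ t, ∑ k, |x k t| ^ p ≤ 1 := by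
  have hp0 : 0 < p := by linarith
  have key : weakLq (ENNReal.ofReal p) x ≤ 1 ↔
      ∀ f : C(K, ℝ) →L[ℝ] ℝ, ‖f‖ ≤ 1 → ∑ k, |f (x k)| ^ p ≤ 1 := by
    rw [weakLq, iSup_le_iff, Subtype.forall]
    refine forall_congr' fun f => forall_congr' fun _ => ?_
    have h := eSum_le_iff hp (fun k => |f (x k)|) (fun k => abs_nonneg _) 1 zero_le_one
    rwa [ENNReal.ofReal_one, Real.one_rpow] at h
  rw [key]
  constructor
  · intro h t
    have h1 := h (ContinuousMap.evalCLM ℝ t) (ContinuousLinearMap.opNorm_le_bound _ zero_le_one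
      fun g => by
        rw [one_mul]
        exact g.norm_coe_le_norm t)
    simpa using h1
  · intro h f hf
    obtain ⟨A, hA⟩ : ∃ A, A = ∑ k, |f (x k)| ^ p := ⟨_, rfl⟩
    have hA0 : 0 ≤ A := by
      rw [hA]; exact Finset.sum_nonneg fun k _ => Real.rpow_nonneg (abs_nonneg _) _
    let g : C(K, ℝ) := ∑ k, ((SignType.sign (f (x k)) : ℝ) * |f (x k)| ^ (p - 1)) • x k
    have hfg : f g = A := by
      rw [hA]
      simp only [g, map_sum, map_smul, smul_eq_mul]
      refine Finset.sum_congr rfl fun k _ => ?_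
      have e : (SignType.sign (f (x k)) : ℝ) * |f (x k)| ^ (p - 1) * f (x k) =
          |f (x k)| ^ (p - 1) * |f (x k)| := by
        rw [← sign_mul_self (f (x k))]; ring
      rw [e]
      rcases (abs_nonneg (f (x k))).eq_or_lt with h0 | h0
      · rw [← h0, mul_zero, Real.zero_rpow (by linarith)]
      · rw [Real.rpow_sub_one h0.ne', div_mul_cancel₀ _ h0.ne']
    have hgn : ‖g‖ ≤ ((p - 1) * A + 1) / p := by
      have hnn : 0 ≤ p - 1 := by linarith
      rw [ContinuousMap.norm_le _ (by positivity)]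
      intro t
      rw [le_div_iff₀ hp0, mul_comm]
      have e : ‖g t‖ ≤ ∑ k, |f (x k)| ^ (p - 1) * |x k t| := by
        simp only [g, ContinuousMap.sum_apply, ContinuousMap.smul_apply, smul_eq_mul]
        refine (norm_sum_le _ _).trans (Finset.sum_le_sum fun k _ => ?_)
        rw [Real.norm_eq_abs, abs_mul, abs_mul, abs_of_nonneg (Real.rpow_nonneg (abs_nonneg _) _)]
        refine mul_le_mul_of_nonneg_right ?_ (abs_nonneg _)
        refine mul_le_of_le_one_left (Real.rpow_nonneg (abs_nonneg _) _) ?_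
        rcases lt_trichotomy (f (x k)) 0 with h | h | h <;> simp [h]
      calc p * ‖g t‖ ≤ p * ∑ k, |f (x k)| ^ (p - 1) * |x k t| := by gcongr
        _ ≤ ∑ k, ((p - 1) * |f (x k)| ^ p + |x k t| ^ p) := by
          rw [Finset.mul_sum]
          exact Finset.sum_le_sum fun k _ => young' hp (abs_nonneg _) (abs_nonneg _)
        _ ≤ (p - 1) * A + 1 := by
          rw [Finset.sum_add_distrib, ← Finset.mul_sum, ← hA]
          have := h t
          linarith
    have h2 : A ≤ ((p - 1) * A + 1) / p := by
      refine le_trans ?_ hgn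
      rw [← hfg]
      refine (le_abs_self _).trans ((f.le_opNorm g).trans ?_)
      exact mul_le_of_le_one_left (norm_nonneg _) hf
    rw [le_div_iff₀ hp0] at h2
    rw [← hA]
    linarith

/-- The finite bound provided by `π_p^m`. -/
def FinBd (p : ℝ) (m : ℕ) (P : ℝ) (T : C(K, ℝ) →L[ℝ] Y) : Prop :=
  ∀ (ι : Type) (s : Finset ι) (y : ι → C(K, ℝ)), s.card ≤ m → (∀ t, ∑ i ∈ s, |y i t| ^ p ≤ 1) →
    ∑ i ∈ s, ‖T (y i)‖ ^ p ≤ P ^ p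

lemma finBd_of_piN {p : ℝ} (hp : 1 < p) (m : ℕ) (T : C(K, ℝ) →L[ℝ] Y) (P : ℝ) (hP : 0 ≤ P)
    (h : piN (ENNReal.ofReal p) (ENNReal.ofReal p) m T ≤ ENNReal.ofReal P) : FinBd p m P T := by
  intro ι s y hs hy
  have hp0 : p ≠ 0 := by linarith
  obtain ⟨e⟩ : Nonempty (s ↪ Fin m) :=
    Function.Embedding.nonempty_of_card_le (by simpa using hs)
  let z : Fin m → C(K, ℝ) := Function.extend e (fun i => y i.1) 0
  have hz : ∀ F : C(K, ℝ) → ℝ, F 0 = 0 → ∑ i ∈ s, F (y i) = ∑ j, F (z j) := by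
    intro F hF
    rw [← Finset.sum_coe_sort s]
    refine Fintype.sum_of_injective e e.injective _ _ (fun j hj => ?_) (fun i => ?_)
    · simp only [z]
      rw [Function.extend_apply' _ _ _ (by simpa using hj)]
      exact hF
    · simp only [z]
      rw [e.injective.extend_apply]
  have hw : weakLq (ENNReal.ofReal p) z ≤ 1 := by
    rw [weak_iff hp]
    intro t
    rw [← hz (fun f => |f t| ^ p) (by simp [Real.zero_rpow hp0])]
    exact hy t
  have h1 := (le_iSup (fun x : {x : Fin m → C(K, ℝ) // weakLq (ENNReal.ofReal p) x ≤ 1} =>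
    eSum (ENNReal.ofReal p) fun k => ENNReal.ofReal ‖T (x.1 k)‖) ⟨z, hw⟩).trans h
  rw [eSum_le_iff hp _ (fun k => norm_nonneg _) P hP] at h1
  rw [hz (fun f => ‖T f‖ ^ p) (by simp [Real.zero_rpow hp0])]
  exact h1

lemma assemble {p p' : ℝ} (hp : 1 < p) (hconj : 1 / p + 1 / p' = 1) (C : ℝ) (hC : 0 < C)
    (m n : ℕ) (hn : 1 ≤ n) (T : C(K, ℝ) →L[ℝ] Y)
    (h : ∀ P : ℝ, 0 ≤ P → FinBd p m P T → ∀ (N : ℕ) (x : Fin N → C(K, ℝ)),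
      (∀ t, ∑ k, |x k t| ^ p ≤ 1) → ∑ k, ‖T (x k)‖ ^ p ≤ C * (1 + Real.log n) ^ (p - 1) * P ^ p) :
    piPQ (ENNReal.ofReal p) (ENNReal.ofReal p) T ≤
      ENNReal.ofReal (C ^ (1 / p) * (1 + Real.log n) ^ (1 / p')) *
        piN (ENNReal.ofReal p) (ENNReal.ofReal p) m T := by
  have hp0 : 0 < p := by linarith
  have hn' : (1:ℝ) ≤ n := by exact_mod_cast hn
  have hl : 0 < 1 + Real.log n := by linarith [Real.log_nonneg hn']
  have hc : 0 < C ^ (1 / p) * (1 + Real.log n) ^ (1 / p') := by positivity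
  by_cases htop : piN (ENNReal.ofReal p) (ENNReal.ofReal p) m T = ⊤
  · rw [htop, ENNReal.mul_top (by simpa using hc)]
    exact le_top
  obtain ⟨P, hP⟩ : ∃ P, P = (piN (ENNReal.ofReal p) (ENNReal.ofReal p) m T).toReal := ⟨_, rfl⟩
  have hP0 : 0 ≤ P := by rw [hP]; exact ENNReal.toReal_nonneg
  have hPe : piN (ENNReal.ofReal p) (ENNReal.ofReal p) m T = ENNReal.ofReal P := by
    rw [hP, ENNReal.ofReal_toReal htop]
  have hb := h P hP0 (finBd_of_piN hp m T P hP0 hPe.le)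
  rw [hPe, ← ENNReal.ofReal_mul hc.le]
  refine iSup_le fun N => iSup_le fun x => ?_
  rw [eSum_le_iff hp _ (fun k => norm_nonneg _) _ (by positivity)]
  refine (hb N x.1 ((weak_iff hp _).1 x.2)).trans_eq ?_
  rw [Real.mul_rpow hc.le hP0, Real.mul_rpow (by positivity) (by positivity),
    ← Real.rpow_mul hC.le, ← Real.rpow_mul hl.le, one_div_mul_cancel hp0.ne', Real.rpow_one]
  have e : 1 / p' * p = p - 1 := by
    have : 1 / p' = 1 - 1 / p := by linarith
    rw [this]; field_simp
  rw [e]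

lemma piPQ_zero {p : ℝ} (hp : 1 < p) :
    piPQ (ENNReal.ofReal p) (ENNReal.ofReal p) (0 : C(K, ℝ) →L[ℝ] Y) = 0 := by
  have hp0 : p ≠ 0 := by linarith
  refine le_antisymm (iSup_le fun N => iSup_le fun x => ?_) zero_le
  have := (eSum_le_iff hp (fun k => ‖(0 : C(K, ℝ) →L[ℝ] Y) (x.1 k)‖) (fun k => norm_nonneg _) 0
    le_rfl).2 (by simp [Real.zero_rpow hp0])
  simpa using this

lemma big_part {p : ℝ} (hp : 1 < p) {m : ℕ} (hm : 1 ≤ m) {P : ℝ} (T : C(K, ℝ) →L[ℝ] Y)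
    (hF : FinBd p m P T) (τ : ℝ) (hτ0 : 0 ≤ τ) (hτ : m * τ ^ p = P ^ p) {N : ℕ}
    (x : Fin N → C(K, ℝ)) (hx : ∀ t, ∑ k, |x k t| ≤ 1) (R : ℝ)
    (hR : ∑ k ∈ Finset.univ.filter (fun k => ¬ τ < ‖T (x k)‖), ‖T (x k)‖ ^ p ≤ R) :
    ∑ k, ‖T (x k)‖ ^ p ≤ P ^ p + R := by
  have hp0 : 0 < p := by linarith
  have hx1 : ∀ t k, |x k t| ≤ 1 := fun t k =>
    (Finset.single_le_sum (f := fun k => |x k t|) (fun _ _ => abs_nonneg _)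
      (Finset.mem_univ k)).trans (hx t)
  have hxs : ∀ (s : Finset (Fin N)) t, ∑ k ∈ s, |x k t| ^ p ≤ 1 := fun s t => by
    refine le_trans ?_ (hx t)
    refine (Finset.sum_le_sum_of_subset_of_nonneg (Finset.subset_univ s)
      fun _ _ _ => Real.rpow_nonneg (abs_nonneg _) _).trans (Finset.sum_le_sum fun k _ => ?_)
    calc |x k t| ^ p ≤ |x k t| ^ (1:ℝ) :=
          Real.rpow_le_rpow_of_exponent_ge' (abs_nonneg _) (hx1 t k) zero_le_one hp.le
      _ = |x k t| := Real.rpow_one _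
  rw [← Finset.sum_filter_add_sum_filter_not Finset.univ (fun k => τ < ‖T (x k)‖)]
  refine add_le_add ?_ hR
  by_cases hc : (Finset.univ.filter (fun k => τ < ‖T (x k)‖)).card ≤ m
  · exact hF _ _ x hc (hxs _)
  · exfalso
    obtain ⟨s, hs, hsc⟩ := Finset.exists_subset_card_eq (not_le.1 hc).le
    have h1 := hF _ s x hsc.le (hxs s)
    have hne : s.Nonempty := Finset.card_pos.1 (by omega)
    have h2 : ∑ _k ∈ s, τ ^ p < ∑ k ∈ s, ‖T (x k)‖ ^ p :=
      Finset.sum_lt_sum_of_nonempty hne fun k hk =>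
        Real.rpow_lt_rpow hτ0 (Finset.mem_filter.1 (hs hk)).2 hp0
    rw [Finset.sum_const, hsc, nsmul_eq_mul, hτ] at h2
    linarith

lemma exists_tau {p : ℝ} (hp : 1 < p) {m : ℕ} (hm : 1 ≤ m) {P : ℝ} (hP : 0 ≤ P) :
    ∃ τ : ℝ, τ = P / (m : ℝ) ^ (1 / p) ∧ 0 ≤ τ ∧ τ ≤ P ∧ m * τ ^ p = P ^ p := by
  have hp0 : 0 < p := by linarith
  have hm' : (1:ℝ) ≤ m := by exact_mod_cast hm
  have hm0 : (0:ℝ) < m := by linarith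
  refine ⟨_, rfl, by positivity, div_le_self hP (Real.one_le_rpow hm' (by positivity)), ?_⟩
  rw [Real.div_rpow hP (by positivity), ← Real.rpow_mul hm0.le, one_div_mul_cancel hp0.ne',
    Real.rpow_one]
  field_simp

lemma sq_le_of_abs {N : ℕ} (x : Fin N → ℝ) (hx : ∑ k, |x k| ≤ 1) : ∑ k, x k ^ 2 ≤ 1 := by
  refine le_trans (Finset.sum_le_sum fun k _ => ?_) hx
  have h1 : |x k| ≤ 1 := (Finset.single_le_sum (f := fun k => |x k|) (fun _ _ => abs_nonneg _)
      (Finset.mem_univ k)).trans hx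
  rw [← sq_abs]
  nlinarith [abs_nonneg (x k)]

lemma case_gt {p : ℝ} (hp : 2 < p) {n : ℕ} (hn : 1 ≤ n) [Nonempty K] {P : ℝ} (hP : 0 ≤ P)
    (T : C(K, ℝ) →L[ℝ] Y) (hT : RankLE T n) (hF : FinBd p n P T) :
    (∀ (N : ℕ) (x : Fin N → C(K, ℝ)), (∀ t, ∑ k, |x k t| ≤ 1) → ∑ k, ‖T (x k)‖ ≤ 2 * n * P) ∧
    (∀ (N : ℕ) (x : Fin N → C(K, ℝ)), (∀ t, ∑ k, |x k t| ≤ 1) →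
        ∑ k, ‖T (x k)‖ ^ p ≤ 5 * P ^ p) := by
  have hp1 : 1 < p := by linarith
  have hn' : (1:ℝ) ≤ n := by exact_mod_cast hn
  have hn0 : (0:ℝ) < n := by linarith
  obtain ⟨τ, -, hτ0, hτP, hτ⟩ := exists_tau hp1 hn hP
  have h2 : ∀ (ι : Type) [Fintype ι] (x : ι → C(K, ℝ)), (∀ t, ∑ k, (x k t) ^ 2 ≤ 1) →
      ∑ k, ‖T (x k)‖ ^ 2 ≤ 4 * (n * τ ^ 2) := by
    intro ι _ x hx
    refine two_summing T n hT (n * τ ^ 2) ?_ x hx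
    intro y hy
    have hy1 : ∀ t k, |y k t| ≤ 1 := fun t k => by
      rw [← sq_le_one_iff_abs_le_one]
      exact (Finset.single_le_sum (f := fun k => (y k t) ^ 2) (fun _ _ => sq_nonneg _)
        (Finset.mem_univ k)).trans (hy t)
    have h3 := hF (Fin n) Finset.univ y (by simp) fun t => by
      refine le_trans (Finset.sum_le_sum fun k _ => ?_) (hy t)
      calc |y k t| ^ p ≤ |y k t| ^ (2:ℝ) :=
            Real.rpow_le_rpow_of_exponent_ge' (abs_nonneg _) (hy1 t k) zero_le_two hp.le
        _ = (y k t) ^ 2 := by rw [Real.rpow_two, sq_abs]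
    have h4 := Real.rpow_sum_le_const_mul_sum_rpow_of_nonneg (s := (Finset.univ : Finset (Fin n)))
      (f := fun k => ‖T (y k)‖ ^ 2) (p := p / 2) (by linarith) (fun i _ => by positivity)
    have e : ∀ a : ℝ, 0 ≤ a → (a ^ 2) ^ (p / 2) = a ^ p := fun a ha => by
      rw [← Real.rpow_two, ← Real.rpow_mul ha]; congr 1; ring
    simp only [e _ (norm_nonneg _), Finset.card_univ, Fintype.card_fin] at h4
    rw [← Real.rpow_le_rpow_iff (z := p / 2) (Finset.sum_nonneg fun i _ => by positivity)
      (by positivity) (by linarith)]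
    refine h4.trans ?_
    rw [Real.mul_rpow hn0.le (by positivity), e _ hτ0]
    calc (n:ℝ) ^ (p / 2 - 1) * ∑ i, ‖T (y i)‖ ^ p ≤ (n:ℝ) ^ (p / 2 - 1) * (n * τ ^ p) := by
          rw [hτ]; gcongr
      _ = (n:ℝ) ^ (p / 2) * τ ^ p := by
          rw [Real.rpow_sub_one hn0.ne']; field_simp
  refine ⟨fun N x hx => ?_, fun N x hx => ?_⟩
  · have h3 := one_summing T n hT (2 * √n * τ) (by positivity) (fun ι _ y hy => by
      refine (h2 ι y hy).trans_eq ?_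
      rw [mul_pow, mul_pow, Real.sq_sqrt hn0.le]; ring) x hx
    refine h3.trans ?_
    calc √(n:ℝ) * (2 * √n * τ) = 2 * (√(n:ℝ) * √n) * τ := by ring
      _ = 2 * n * τ := by rw [Real.mul_self_sqrt hn0.le]
      _ ≤ 2 * n * P := by gcongr
  · have := big_part hp1 hn T hF τ hτ0 hτ x hx (4 * P ^ p) (by
      calc ∑ k ∈ Finset.univ.filter (fun k => ¬ τ < ‖T (x k)‖), ‖T (x k)‖ ^ p
          ≤ ∑ k ∈ Finset.univ.filter (fun k => ¬ τ < ‖T (x k)‖), τ ^ (p - 2) * ‖T (x k)‖ ^ 2 := by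
            refine Finset.sum_le_sum fun k hk => ?_
            have hk' := not_lt.1 (Finset.mem_filter.1 hk).2
            rcases (norm_nonneg (T (x k))).eq_or_lt with h0 | h0
            · rw [← h0, Real.zero_rpow (by linarith)]; simp
            · have e : ‖T (x k)‖ ^ p = ‖T (x k)‖ ^ (p - 2) * ‖T (x k)‖ ^ 2 := by
                rw [← Real.rpow_two, ← Real.rpow_add h0]; congr 1; ring
              rw [e]
              gcongr
        _ ≤ ∑ k, τ ^ (p - 2) * ‖T (x k)‖ ^ 2 :=
            Finset.sum_le_sum_of_subset_of_nonneg (Finset.subset_univ _) fun _ _ _ => by positivity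
        _ ≤ τ ^ (p - 2) * (4 * (n * τ ^ 2)) := by
            rw [← Finset.mul_sum]
            gcongr
            exact h2 _ x fun t => sq_le_of_abs _ (hx t)
        _ = 4 * P ^ p := by
            rw [← hτ]
            rcases hτ0.eq_or_lt with h0 | h0
            · rw [← h0, Real.zero_rpow (by linarith : p ≠ 0)]; simp
            · have e : τ ^ p = τ ^ (p - 2) * τ ^ 2 := by
                rw [← Real.rpow_two, ← Real.rpow_add h0]; congr 1; ring
              rw [e]; ring)
    linarith

lemma case_lt {p p' : ℝ} (hp1 : 1 < p) (hp : p < 2) (hconj : 1 / p + 1 / p' = 1) {n : ℕ}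
    (hn : 1 ≤ n) [Nonempty K] {P : ℝ} (hP : 0 ≤ P)
    (T : C(K, ℝ) →L[ℝ] Y) (hT : RankLE T n) (hF : FinBd p ⌊(n : ℝ) ^ (p' / 2)⌋₊ P T) :
    (∀ (N : ℕ) (x : Fin N → C(K, ℝ)), (∀ t, ∑ k, |x k t| ≤ 1) → ∑ k, ‖T (x k)‖ ≤ 2 * n * P) ∧
    (∀ (N : ℕ) (x : Fin N → C(K, ℝ)), (∀ t, ∑ k, |x k t| ≤ 1) →
        ∑ k, ‖T (x k)‖ ^ p ≤ 5 * P ^ p) := by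
  have hp0 : 0 < p := by linarith
  have hn' : (1:ℝ) ≤ n := by exact_mod_cast hn
  have hn0 : (0:ℝ) < n := by linarith
  have hpi : 1 / p' = (p - 1) / p := by
    have : 1 / p' = 1 - 1 / p := by linarith
    rw [this]; field_simp
  have hp'e : p' = p / (p - 1) := by
    rw [← one_div_one_div p', hpi, one_div_div]
  have hpm : 0 < p - 1 := by linarith
  have hp'2 : 2 ≤ p' := by
    rw [hp'e, le_div_iff₀ hpm]; linarith
  have hp'0 : 0 < p' := by linarith
  obtain ⟨m, hm⟩ : ∃ m, m = ⌊(n : ℝ) ^ (p' / 2)⌋₊ := ⟨_, rfl⟩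
  rw [← hm] at hF
  have hnm : n ≤ m := by
    rw [hm]
    refine Nat.le_floor ?_
    calc (n:ℝ) = (n:ℝ) ^ (1:ℝ) := (Real.rpow_one _).symm
      _ ≤ _ := Real.rpow_le_rpow_of_exponent_le hn' (by linarith)
  have hm1 : 1 ≤ m := hn.trans hnm
  have hm1' : (1:ℝ) ≤ m := by exact_mod_cast hm1
  have hm0 : (0:ℝ) < m := by linarith
  have hmn : √(n:ℝ) ≤ 2 * (m:ℝ) ^ ((p - 1) / p) := by
    have h1 : (n:ℝ) ^ (p' / 2) ≤ 2 * m := by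
      have := (Nat.lt_floor_add_one ((n:ℝ) ^ (p' / 2))).le
      rw [← hm] at this
      linarith
    have h2 := Real.rpow_le_rpow (by positivity) h1 (show 0 ≤ (p - 1) / p by positivity)
    rw [← Real.rpow_mul hn0.le, Real.mul_rpow (by norm_num) hm0.le, ← hpi] at h2
    have e : p' / 2 * (1 / p') = 1 / 2 := by field_simp
    rw [e, ← Real.sqrt_eq_rpow] at h2
    rw [← hpi]
    refine h2.trans ?_
    gcongr
    calc (2:ℝ) ^ (1 / p') ≤ 2 ^ (1:ℝ) := by
          refine Real.rpow_le_rpow_of_exponent_le (by norm_num) ?_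
          rw [div_le_one hp'0]; linarith
      _ = 2 := Real.rpow_one _
  obtain ⟨τ, hτe, hτ0, hτP, hτ⟩ := exists_tau hp1 hm1 hP
  have e2 : ∀ a : ℝ, 0 ≤ a → (a ^ 2) ^ (p / 2) = a ^ p := fun a ha => by
    rw [← Real.rpow_two, ← Real.rpow_mul ha]; congr 1; ring
  have h2 : ∀ (ι : Type) [Fintype ι] (x : ι → C(K, ℝ)), (∀ t, ∑ k, (x k t) ^ 2 ≤ 1) →
      ∑ k, ‖T (x k)‖ ^ 2 ≤ 4 * P ^ 2 := by
    intro ι _ x hx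
    refine two_summing T n hT (P ^ 2) ?_ x hx
    intro y hy
    obtain ⟨S, hS⟩ : ∃ S, S = ∑ k, ‖T (y k)‖ ^ 2 := ⟨_, rfl⟩
    have hS0 : 0 ≤ S := by rw [hS]; positivity
    rw [← hS]
    rcases hS0.eq_or_lt with h0 | h0
    · rw [← h0]; positivity
    obtain ⟨b, hb⟩ : ∃ b : Fin n → ℝ, ∀ k, b k = ‖T (y k)‖ ^ 2 / S := ⟨_, fun _ => rfl⟩
    have hb0 : ∀ k, 0 ≤ b k := fun k => by rw [hb]; positivity
    have hbs : ∑ k, b k = 1 := by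
      simp only [hb]
      rw [← Finset.sum_div, ← hS, div_self h0.ne']
    have hbp : ∀ k, (b k ^ (1 / p - 1 / 2)) ^ p = b k ^ (1 - p / 2) := fun k => by
      rw [← Real.rpow_mul (hb0 k)]; congr 1; field_simp
    have h3 := hF (Fin n) Finset.univ (fun k => (b k ^ (1 / p - 1 / 2)) • y k) (by simpa using hnm)
      fun t => by
        calc ∑ k, |((b k ^ (1 / p - 1 / 2)) • y k) t| ^ p
            ≤ ∑ k, ((1 - p / 2) * b k + (p / 2) * (y k t) ^ 2) := by
              refine Finset.sum_le_sum fun k _ => ?_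
              rw [ContinuousMap.smul_apply, smul_eq_mul, abs_mul,
                abs_of_nonneg (Real.rpow_nonneg (hb0 k) _),
                Real.mul_rpow (Real.rpow_nonneg (hb0 k) _) (abs_nonneg _), hbp,
                ← e2 _ (abs_nonneg _), sq_abs]
              exact Real.geom_mean_le_arith_mean2_weighted (by linarith) (by linarith) (hb0 k)
                (sq_nonneg _) (by ring)
          _ ≤ 1 := by
              rw [Finset.sum_add_distrib, ← Finset.mul_sum, ← Finset.mul_sum, hbs]
              have := hy t
              nlinarith
    have h4 : ∑ k, ‖T ((b k ^ (1 / p - 1 / 2)) • y k)‖ ^ p = S ^ (p / 2) := by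
      calc ∑ k, ‖T ((b k ^ (1 / p - 1 / 2)) • y k)‖ ^ p = ∑ k, b k * S ^ (p / 2) := by
            refine Finset.sum_congr rfl fun k _ => ?_
            have hbS : ‖T (y k)‖ ^ 2 = b k * S := by rw [hb, div_mul_cancel₀ _ h0.ne']
            rw [map_smul, norm_smul, Real.norm_eq_abs, abs_of_nonneg (Real.rpow_nonneg (hb0 k) _),
              Real.mul_rpow (Real.rpow_nonneg (hb0 k) _) (norm_nonneg _), hbp,
              ← e2 _ (norm_nonneg _), hbS, Real.mul_rpow (hb0 k) hS0, ← mul_assoc]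
            congr 1
            rcases (hb0 k).eq_or_lt with h1 | h1
            · rw [← h1, Real.zero_rpow (by linarith : p / 2 ≠ 0), mul_zero]
            · rw [← Real.rpow_add h1, sub_add_cancel, Real.rpow_one]
        _ = S ^ (p / 2) := by rw [← Finset.sum_mul, hbs, one_mul]
    rw [h4, ← e2 P hP] at h3
    exact (Real.rpow_le_rpow_iff hS0 (by positivity) (by positivity)).1 h3
  have h1 : ∀ (N : ℕ) (x : Fin N → C(K, ℝ)), (∀ t, ∑ k, |x k t| ≤ 1) →
      ∑ k, ‖T (x k)‖ ≤ √n * (2 * P) := fun N x hx =>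
    one_summing T n hT (2 * P) (by positivity) (fun ι _ y hy => by
      refine (h2 ι y hy).trans_eq ?_
      ring) x hx
  refine ⟨fun N x hx => ?_, fun N x hx => ?_⟩
  · refine (h1 N x hx).trans ?_
    have : √(n:ℝ) ≤ n := by
      rw [Real.sqrt_le_left hn0.le]; nlinarith
    calc √(n:ℝ) * (2 * P) ≤ n * (2 * P) := by gcongr
      _ = 2 * n * P := by ring
  · have := big_part hp1 hm1 T hF τ hτ0 hτ x hx (4 * P ^ p) (by
      calc ∑ k ∈ Finset.univ.filter (fun k => ¬ τ < ‖T (x k)‖), ‖T (x k)‖ ^ p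
          ≤ ∑ k ∈ Finset.univ.filter (fun k => ¬ τ < ‖T (x k)‖), τ ^ (p - 1) * ‖T (x k)‖ := by
            refine Finset.sum_le_sum fun k hk => ?_
            have hk' := not_lt.1 (Finset.mem_filter.1 hk).2
            rcases (norm_nonneg (T (x k))).eq_or_lt with h0 | h0
            · rw [← h0, Real.zero_rpow (by linarith)]; simp
            · have e : ‖T (x k)‖ ^ p = ‖T (x k)‖ ^ (p - 1) * ‖T (x k)‖ := by
                rw [Real.rpow_sub_one h0.ne', div_mul_cancel₀ _ h0.ne']
              rw [e]
              gcongr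
        _ ≤ ∑ k, τ ^ (p - 1) * ‖T (x k)‖ :=
            Finset.sum_le_sum_of_subset_of_nonneg (Finset.subset_univ _) fun _ _ _ => by positivity
        _ ≤ τ ^ (p - 1) * (√n * (2 * P)) := by
            rw [← Finset.mul_sum]
            gcongr
            exact h1 _ x hx
        _ ≤ τ ^ (p - 1) * (2 * (m:ℝ) ^ ((p - 1) / p) * (2 * P)) := by gcongr
        _ = 4 * P ^ p := by
            have e : τ ^ (p - 1) * (m:ℝ) ^ ((p - 1) / p) = P ^ (p - 1) := by
              rw [hτe, Real.div_rpow hP (by positivity), ← Real.rpow_mul hm0.le,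
                show 1 / p * (p - 1) = (p - 1) / p by ring, div_mul_cancel₀]
              positivity
            have e3 : P ^ (p - 1) * P = P ^ p := by
              rcases hP.eq_or_lt with h0 | h0
              · rw [← h0, Real.zero_rpow (by linarith : p ≠ 0), mul_zero]
              · rw [Real.rpow_sub_one h0.ne', div_mul_cancel₀ _ h0.ne']
            rw [← e3, ← e]; ring)
    linarith

end CK5


/-- for `1 < p < ∞`, `p ≠ 2`, with conjugate exponent `p'`, there
is a constant `c_p` such that for every operator `T : C(K) → Y` of rank at most
`n` (`K` compact Hausdorff): if `2 < p` then
`π_p(T) ≤ c_p (1 + ln n)^{1/p'} π_p^n(T)`, and if `p < 2` then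
`π_p(T) ≤ c_p (1 + ln n)^{1/p'} π_p^{⌊n^{p'/2}⌋}(T)`. -/
theorem statement14 (p p' : ℝ) (hp1 : 1 < p) (hp2 : p ≠ 2) (hconj : 1 / p + 1 / p' = 1) :
    ∃ c : ℝ, 0 < c ∧
      ∀ (K : Type*) [TopologicalSpace K] [CompactSpace K] [T2Space K]
        (Y : Type*) [NormedAddCommGroup Y] [NormedSpace ℝ Y] [CompleteSpace Y]
        (n : ℕ) (T : C(K, ℝ) →L[ℝ] Y), RankLE T n →
        (2 < p →
          piPQ (ENNReal.ofReal p) (ENNReal.ofReal p) T ≤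
            ENNReal.ofReal (c * (1 + Real.log n) ^ (1 / p')) *
              piN (ENNReal.ofReal p) (ENNReal.ofReal p) n T) ∧
        (p < 2 →
          piPQ (ENNReal.ofReal p) (ENNReal.ofReal p) T ≤
            ENNReal.ofReal (c * (1 + Real.log n) ^ (1 / p')) *
              piN (ENNReal.ofReal p) (ENNReal.ofReal p) (⌊(n : ℝ) ^ (p' / 2)⌋₊) T) := by
  obtain ⟨C, hC, hcore⟩ := core p hp1 5 (by norm_num)
  refine ⟨C ^ (1 / p), by positivity, ?_⟩
  intro K _ _ _ Y _ _ _ n T hT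
  by_cases hT0 : T = 0
  · subst hT0
    rw [piPQ_zero hp1]
    exact ⟨fun _ => zero_le, fun _ => zero_le⟩
  have hK : Nonempty K := by
    by_contra h
    rw [not_nonempty_iff] at h
    refine hT0 (ContinuousLinearMap.ext fun x => ?_)
    have : x = 0 := by ext t; exact h.elim t
    rw [this]; simp
  have hn : 1 ≤ n := by
    by_contra h
    have h0 : n = 0 := by omega
    obtain ⟨h1, h2⟩ := hT
    rw [h0, Nat.le_zero, Submodule.finrank_eq_zero] at h2
    refine hT0 (ContinuousLinearMap.ext fun x => ?_)
    have : T x ∈ LinearMap.range (T : C(K, ℝ) →ₗ[ℝ] Y) := ⟨x, rfl⟩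
    rw [h2] at this
    simpa using this
  refine ⟨fun hp => ?_, fun hp => ?_⟩
  · refine assemble hp1 hconj C hC n n hn T fun P hP hF N x hx => ?_
    obtain ⟨h1, h2⟩ := case_gt hp hn hP T hT hF
    exact hcore K Y T n hn P hP h1 h2 N x hx
  · refine assemble hp1 hconj C hC _ n hn T fun P hP hF N x hx => ?_
    obtain ⟨h1, h2⟩ := case_lt hp1 hp hconj hn hP T hT hF
    exact hcore K Y T n hn P hP h1 h2 N x hx

end
end

section
/- Let 0 < θ < 1, 1 ≤ q ≤ 2 ≤ s ≤ ∞ and t ≥ q with 1/s = (1−θ)/q' + θ/2 (q' the conjugate exponent of q) and 1/t = 1/q − θ/2. There is an absolute constant c₀ such that for every n ∈ ℕ there exists a bounded linear operator T : ℓ_{q'}^{m} → ℓ_2^n with m = ⌊n^{s/2}⌋ and π_{p,q}(T) > 0 satisfying π_{p,q}^k(T) ≤ c₀ · √s · (k / n^{s/2})^{1/p − 1/t} · π_{p,q}(T) for all p with q ≤ p ≤ t and all k ∈ ℕ. -/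
open scoped ENNReal NNReal BigOperators

noncomputable section

def sg (b : Bool) : ℝ := if b then 1 else -1

lemma sum_exp_sign {n : ℕ} (y : Fin n → ℝ) :
    ∑ ε : Fin n → Bool, Real.exp (∑ i, sg (ε i) * y i) ≤ 2 ^ n * Real.exp ((∑ i, y i ^ 2) / 2) := by
  have h1 : ∑ ε : Fin n → Bool, Real.exp (∑ i, sg (ε i) * y i)
      = ∏ i, ∑ b : Bool, Real.exp (sg b * y i) := by
    rw [Fintype.prod_sum]
    simp_rw [Real.exp_sum]
  have h2 : ∀ i, ∑ b : Bool, Real.exp (sg b * y i) = 2 * Real.cosh (y i) := by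
    intro i
    rw [Real.cosh_eq]
    simp [sg]
    ring
  rw [h1]
  simp_rw [h2]
  rw [Finset.prod_mul_distrib, Finset.sum_div, Real.exp_sum]
  simp only [Finset.prod_const, Finset.card_univ, Fintype.card_fin]
  gcongr with i
  exact Real.cosh_le_exp_half_sq _

lemma rpow_le_exp_aux {x p : ℝ} (hx : 0 ≤ x) (hp : 0 < p) :
    x ^ p ≤ p ^ (p / 2) * Real.exp (Real.sqrt p * x - p) := by
  have hs : 0 < Real.sqrt p := Real.sqrt_pos.2 hp
  have h1 : x / Real.sqrt p ≤ Real.exp (x / Real.sqrt p - 1) := by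
    have := Real.add_one_le_exp (x / Real.sqrt p - 1)
    linarith
  have h2 : (x / Real.sqrt p) ^ p ≤ Real.exp (Real.sqrt p * x - p) := by
    calc (x / Real.sqrt p) ^ p ≤ (Real.exp (x / Real.sqrt p - 1)) ^ p := by
          gcongr
      _ = Real.exp (Real.sqrt p * x - p) := by
          rw [← Real.exp_mul]
          congr 1
          have : p = Real.sqrt p * Real.sqrt p := (Real.mul_self_sqrt hp.le).symm
          rw [sub_mul, one_mul]
          congr 1
          rw [div_mul_eq_mul_div, div_eq_iff hs.ne']
          nth_rewrite 1 [this]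
          ring
  rw [Real.div_rpow hx hs.le, div_le_iff₀ (by positivity)] at h2
  have h3 : Real.sqrt p ^ p = p ^ (p / 2) := by
    rw [Real.sqrt_eq_rpow, ← Real.rpow_mul hp.le]
    congr 1
    ring
  rw [h3] at h2
  linarith

lemma khinchine {n : ℕ} (y : Fin n → ℝ) (hy : ∑ i, y i ^ 2 ≤ 1) {p : ℝ} (hp : 0 < p) :
    ∑ ε : Fin n → Bool, |∑ i, sg (ε i) * y i| ^ p ≤ 2 ^ n * (2 * p ^ (p / 2)) := by
  have key : ∀ ε : Fin n → Bool, |∑ i, sg (ε i) * y i| ^ p ≤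
      p ^ (p / 2) * Real.exp (-p) * (Real.exp (∑ i, sg (ε i) * (Real.sqrt p * y i))
        + Real.exp (∑ i, sg (ε i) * (-(Real.sqrt p * y i)))) := by
    intro ε
    refine (rpow_le_exp_aux (abs_nonneg _) hp).trans ?_
    rw [mul_assoc]
    gcongr
    rw [sub_eq_neg_add, Real.exp_add]
    gcongr
    have e1 : ∑ i, sg (ε i) * (Real.sqrt p * y i) = Real.sqrt p * ∑ i, sg (ε i) * y i := by
      rw [Finset.mul_sum]; congr 1; ext i; ring
    have e2 : ∑ i, sg (ε i) * (-(Real.sqrt p * y i)) = -(Real.sqrt p * ∑ i, sg (ε i) * y i) := by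
      rw [Finset.mul_sum, ← Finset.sum_neg_distrib]; congr 1; ext i; ring
    rw [e1, e2]
    rcases abs_cases (∑ i, sg (ε i) * y i) with ⟨h, _⟩ | ⟨h, _⟩ <;> rw [h]
    · linarith [Real.exp_pos (-(Real.sqrt p * ∑ i, sg (ε i) * y i))]
    · rw [mul_neg]
      linarith [Real.exp_pos ((Real.sqrt p * ∑ i, sg (ε i) * y i))]
  refine (Finset.sum_le_sum fun ε _ => key ε).trans ?_
  rw [← Finset.mul_sum, Finset.sum_add_distrib]
  have s1 := sum_exp_sign (fun i => Real.sqrt p * y i)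
  have s2 := sum_exp_sign (fun i => -(Real.sqrt p * y i))
  have b : ∑ i, (Real.sqrt p * y i) ^ 2 ≤ p := by
    simp_rw [mul_pow, Real.sq_sqrt hp.le]
    rw [← Finset.mul_sum]
    nlinarith
  have b2 : ∑ i, (-(Real.sqrt p * y i)) ^ 2 ≤ p := by
    simpa using b
  have t1 : Real.exp ((∑ i, (Real.sqrt p * y i) ^ 2) / 2) ≤ Real.exp p := by
    gcongr; linarith
  have t2 : Real.exp ((∑ i, (-(Real.sqrt p * y i)) ^ 2) / 2) ≤ Real.exp p := by
    gcongr; linarith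
  have hpp : 0 ≤ p ^ (p / 2) := by positivity
  calc p ^ (p / 2) * Real.exp (-p) * (_ + _)
      ≤ p ^ (p / 2) * Real.exp (-p) * (2 ^ n * Real.exp p + 2 ^ n * Real.exp p) := by
        gcongr
        · exact s1.trans (by gcongr)
        · exact s2.trans (by gcongr)
    _ = 2 ^ n * (2 * p ^ (p / 2)) * (Real.exp (-p) * Real.exp p) := by ring
    _ = 2 ^ n * (2 * p ^ (p / 2)) := by rw [← Real.exp_add]; simp

/-- truncated exponential -/
noncomputable def TE (N : ℕ) (x : ℝ) : ℝ := ∑ a ∈ Finset.range (N + 1), x ^ a / (a.factorial : ℝ)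

lemma TE_nonneg (N : ℕ) {x : ℝ} (hx : 0 ≤ x) : 0 ≤ TE N x :=
  Finset.sum_nonneg fun a _ => by positivity

lemma one_le_TE (N : ℕ) {x : ℝ} (hx : 0 ≤ x) : 1 ≤ TE N x := by
  have := Finset.single_le_sum (f := fun a : ℕ => x ^ a / (a.factorial : ℝ))
    (s := Finset.range (N + 1)) (fun a _ => by positivity) (Finset.mem_range.2 (Nat.succ_pos N))
  simpa [TE] using this

lemma pow_le_TE (N : ℕ) {x : ℝ} (hx : 0 ≤ x) : x ^ N / (N.factorial : ℝ) ≤ TE N x := by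
  exact Finset.single_le_sum (f := fun a : ℕ => x ^ a / (a.factorial : ℝ))
    (s := Finset.range (N + 1)) (fun a _ => by positivity) (Finset.mem_range.2 (Nat.lt_succ_self N))

lemma TE_add (N : ℕ) {x y : ℝ} (hx : 0 ≤ x) (hy : 0 ≤ y) : TE N (x + y) ≤ TE N x * TE N y := by
  have h1 : TE N (x + y) = ∑ k ∈ Finset.range (N + 1), ∑ m ∈ Finset.HasAntidiagonal.antidiagonal k,
      (x ^ m.1 / (m.1.factorial : ℝ)) * (y ^ m.2 / (m.2.factorial : ℝ)) := by
    unfold TE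
    refine Finset.sum_congr rfl fun k _ => ?_
    rw [(Commute.all x y).add_pow', Finset.sum_div]
    refine Finset.sum_congr rfl fun m hm => ?_
    have hm' := Finset.HasAntidiagonal.mem_antidiagonal.1 hm
    subst hm'
    rw [nsmul_eq_mul]
    have := Nat.add_choose_mul_factorial_mul_factorial m.1 m.2
    rw [← Nat.choose_symm_add] at this
    have h : ((m.1 + m.2).choose m.1 : ℝ) * m.1.factorial * m.2.factorial
        = (m.1 + m.2).factorial := by exact_mod_cast this
    have := Nat.factorial_pos m.1
    have := Nat.factorial_pos m.2
    have := Nat.factorial_pos (m.1 + m.2)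
    field_simp
    rw [← h]; ring
  rw [h1, Finset.sum_sigma']
  unfold TE
  rw [Finset.sum_mul_sum, ← Finset.sum_product']
  let e : (Σ _ : ℕ, ℕ × ℕ) → ℕ × ℕ := fun z => z.2
  have inj : Set.InjOn e ((Finset.range (N+1)).sigma fun k => Finset.HasAntidiagonal.antidiagonal k) := by
    rintro ⟨a, b⟩ ha ⟨c, d⟩ hc h
    simp only [Finset.coe_sigma, Set.mem_sigma_iff, Finset.mem_coe, Finset.HasAntidiagonal.mem_antidiagonal] at ha hc
    simp only [e] at h
    subst h
    have : a = c := ha.2.symm.trans hc.2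
    subst this
    rfl
  rw [← Finset.sum_image (g := e) (f := fun m : ℕ × ℕ =>
    (x ^ m.1 / (m.1.factorial : ℝ)) * (y ^ m.2 / (m.2.factorial : ℝ))) inj]
  refine Finset.sum_le_sum_of_subset_of_nonneg ?_ fun m _ _ => by positivity
  intro m hm
  simp only [Finset.mem_image, Finset.mem_sigma, Finset.mem_range, Finset.HasAntidiagonal.mem_antidiagonal, e] at hm
  obtain ⟨⟨a, b⟩, ⟨h1, h2⟩, rfl⟩ := hm
  simp only [Finset.mem_product, Finset.mem_range] at *
  omega

lemma TE_sum (N : ℕ) {ι : Type*} (S : Finset ι) (x : ι → ℝ) (hx : ∀ i, 0 ≤ x i) :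
    TE N (∑ i ∈ S, x i) ≤ ∏ i ∈ S, TE N (x i) := by
  classical
  induction S using Finset.induction_on with
  | empty =>
    simp only [Finset.sum_empty, Finset.prod_empty]
    unfold TE
    rw [Finset.sum_range_succ']
    simp
  | insert a S ha ih =>
    rw [Finset.sum_insert ha, Finset.prod_insert ha]
    exact (TE_add N (hx a) (Finset.sum_nonneg fun i _ => hx i)).trans
      (mul_le_mul_of_nonneg_left ih (TE_nonneg N (hx a)))

/-- the scale parameter -/
noncomputable def rr (n : ℕ) (s : ℝ) : ℝ :=
  (4 * Real.exp 1 * s ^ (s / 2) * (Real.exp 1 * n) ^ (s / 2 - 1))⁻¹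

lemma term_bound {n : ℕ} (hn : 0 < n) {s : ℝ} (hs : 2 ≤ s) {b : ℕ} (hb : 1 ≤ b) (hbn : b ≤ n) :
    rr n s ^ b * (s * b) ^ (s * b / 2) / (b.factorial : ℝ) ≤
      (1 / 4) ^ b * ((n : ℝ) ^ (s / 2 - 1))⁻¹ := by
  have hs0 : 0 < s := by linarith
  have hn' : (0 : ℝ) < n := by exact_mod_cast hn
  have hb' : (0 : ℝ) < b := by exact_mod_cast hb
  set h := s / 2 - 1 with hh
  have hh0 : 0 ≤ h := by rw [hh]; linarith
  set D := s ^ (s / 2) with hD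
  have hDpos : 0 < D := by positivity
  have e1 : (s * b) ^ (s * b / 2) = D ^ b * (((b : ℝ) ^ b) ^ h * (b : ℝ) ^ b) := by
    rw [Real.mul_rpow hs0.le hb'.le, hD]
    congr 1
    · rw [← Real.rpow_natCast, ← Real.rpow_mul hs0.le]; congr 1; ring
    · rw [← Real.rpow_natCast (b : ℝ) b, ← Real.rpow_mul hb'.le, ← Real.rpow_add hb']
      congr 1; rw [hh]; ring
  have e2 : (b : ℝ) ^ b / (b.factorial : ℝ) ≤ Real.exp 1 ^ b := by
    rw [← Real.exp_nat_mul, mul_one]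
    exact Real.pow_div_factorial_le_exp _ hb'.le _
  have e3 : ((b : ℝ) ^ b) * n ≤ (Real.exp 1 * n) ^ b := by
    obtain ⟨a, rfl⟩ : ∃ a, b = a + 1 := ⟨b - 1, by omega⟩
    rw [mul_pow, ← Real.exp_nat_mul, mul_one]
    have h1 : ((a + 1 : ℕ) : ℝ) ≤ Real.exp ((a + 1 : ℕ) : ℝ) := by
      linarith [Real.add_one_le_exp ((a + 1 : ℕ) : ℝ)]
    have h2 : ((a + 1 : ℕ) : ℝ) ^ a ≤ (n : ℝ) ^ a := by
      gcongr
    calc ((a + 1 : ℕ) : ℝ) ^ (a + 1) * n = ((a + 1 : ℕ) : ℝ) * (((a + 1 : ℕ) : ℝ) ^ a * n) := by ring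
      _ ≤ Real.exp ((a + 1 : ℕ) : ℝ) * ((n : ℝ) ^ a * n) := by gcongr
      _ = _ := by ring
  have e4 : ((b : ℝ) ^ b) ^ h * (n : ℝ) ^ h ≤ ((Real.exp 1 * n) ^ h) ^ b := by
    rw [← Real.mul_rpow (by positivity) hn'.le]
    refine (Real.rpow_le_rpow (by positivity) e3 hh0).trans (le_of_eq ?_)
    rw [← Real.rpow_natCast, ← Real.rpow_natCast, ← Real.rpow_mul (by positivity),
      ← Real.rpow_mul (by positivity), mul_comm (b : ℝ) h]
  rw [e1]
  unfold rr
  rw [← hh, ← hD]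
  set G := (Real.exp 1 * (n : ℝ)) ^ h with hG
  have hGpos : 0 < G := by positivity
  have hnh : 0 < (n : ℝ) ^ h := by positivity
  rw [le_mul_inv_iff₀ hnh]
  calc (4 * Real.exp 1 * D * G)⁻¹ ^ b * (D ^ b * (((b : ℝ) ^ b) ^ h * (b : ℝ) ^ b)) /
        (b.factorial : ℝ) * (n : ℝ) ^ h
      = (4 * Real.exp 1 * D * G)⁻¹ ^ b * D ^ b * ((((b : ℝ) ^ b) ^ h * (n : ℝ) ^ h) * ((b : ℝ) ^ b /
        (b.factorial : ℝ))) := by ring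
    _ ≤ (4 * Real.exp 1 * D * G)⁻¹ ^ b * D ^ b * (G ^ b * Real.exp 1 ^ b) := by gcongr
    _ = ((4 * Real.exp 1 * D * G)⁻¹ * (D * G * Real.exp 1)) ^ b := by
        rw [mul_pow, mul_pow, mul_pow]; ring
    _ = (1 / 4) ^ b := by
        congr 1
        have := Real.exp_pos 1
        field_simp

lemma mean_bound {n : ℕ} (hn : 0 < n) {s : ℝ} (hs : 2 ≤ s) (y : Fin n → ℝ)
    (hy : ∑ i, y i ^ 2 ≤ 1) :
    ∑ ε : Fin n → Bool, TE n (rr n s * |∑ i, sg (ε i) * y i| ^ s) ≤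
      2 ^ n * (1 + ((n : ℝ) ^ (s / 2 - 1))⁻¹) := by
  have hs0 : 0 < s := by linarith
  have hn' : (0 : ℝ) < n := by exact_mod_cast hn
  have hr : 0 < rr n s := by unfold rr; positivity
  unfold TE
  rw [Finset.sum_comm, Finset.sum_range_succ']
  have h0 : ∑ ε : Fin n → Bool, (rr n s * |∑ i, sg (ε i) * y i| ^ s) ^ 0 / ((Nat.factorial 0 : ℕ) : ℝ)
      = 2 ^ n := by simp
  rw [h0]
  have h1 : ∀ a ∈ Finset.range n,
      ∑ ε : Fin n → Bool, (rr n s * |∑ i, sg (ε i) * y i| ^ s) ^ (a + 1) / ((a + 1).factorial : ℝ) ≤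
      2 ^ n * ((n : ℝ) ^ (s / 2 - 1))⁻¹ * (1 / 2 * (1 / 4) ^ a) := by
    intro a ha
    have ha' : a + 1 ≤ n := by have := Finset.mem_range.1 ha; omega
    have hb' : (0 : ℝ) < ((a + 1 : ℕ) : ℝ) := by positivity
    have k := khinchine y hy (p := s * ((a + 1 : ℕ) : ℝ)) (by positivity)
    have t := term_bound hn hs (b := a + 1) (by omega) ha'
    have e : ∀ ε : Fin n → Bool, (rr n s * |∑ i, sg (ε i) * y i| ^ s) ^ (a + 1) /
        ((a + 1).factorial : ℝ) = rr n s ^ (a + 1) / ((a + 1).factorial : ℝ) *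
        |∑ i, sg (ε i) * y i| ^ (s * ((a + 1 : ℕ) : ℝ)) := by
      intro ε
      rw [mul_pow, Real.rpow_mul (abs_nonneg _), Real.rpow_natCast]
      ring
    simp_rw [e]
    rw [← Finset.mul_sum]
    calc _ ≤ rr n s ^ (a + 1) / ((a + 1).factorial : ℝ) * (2 ^ n * (2 * (s * ((a + 1 : ℕ) : ℝ)) ^
          (s * ((a + 1 : ℕ) : ℝ) / 2))) := by gcongr
      _ = 2 ^ n * 2 * (rr n s ^ (a + 1) * (s * ((a + 1 : ℕ) : ℝ)) ^
          (s * ((a + 1 : ℕ) : ℝ) / 2) / ((a + 1).factorial : ℝ)) := by ring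
      _ ≤ 2 ^ n * 2 * ((1 / 4) ^ (a + 1) * ((n : ℝ) ^ (s / 2 - 1))⁻¹) := by gcongr
      _ = _ := by ring
  have h2 : ∑ a ∈ Finset.range n, (1 / 2 * (1 / 4 : ℝ) ^ a) ≤ 1 := by
    rw [← Finset.mul_sum]
    have := geom_sum_eq (x := (1 / 4 : ℝ)) (by norm_num) n
    rw [this]
    have : (0 : ℝ) ≤ (1 / 4) ^ n := by positivity
    have h5 : ((1 / 4 : ℝ) ^ n - 1) / (1 / 4 - 1) = (1 - (1 / 4) ^ n) * (4 / 3) := by ring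
    rw [h5]
    linarith
  have h3 := Finset.sum_le_sum h1
  rw [← Finset.mul_sum] at h3
  have h4 : 2 ^ n * ((n : ℝ) ^ (s / 2 - 1))⁻¹ * ∑ a ∈ Finset.range n, (1 / 2 * (1 / 4 : ℝ) ^ a)
      ≤ 2 ^ n * ((n : ℝ) ^ (s / 2 - 1))⁻¹ * 1 := by gcongr
  linarith

lemma exists_net (n : ℕ) : ∃ S : Finset (EuclideanSpace ℝ (Fin n)), S.card ≤ 5 ^ n ∧
    (∀ c ∈ S, ‖c‖ ≤ 2) ∧ ∀ y : EuclideanSpace ℝ (Fin n), ‖y‖ ≤ 2 → ∃ c ∈ S, ‖y - c‖ < 1 := by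
  classical
  let P : ℕ → Prop := fun k => ∃ S : Finset (EuclideanSpace ℝ (Fin n)), S.card = k ∧
    (∀ c ∈ S, ‖c‖ ≤ 2) ∧ (∀ c ∈ S, ∀ d ∈ S, c ≠ d → 1 ≤ ‖c - d‖)
  have hb : ∀ k, P k → k ≤ 5 ^ n := by
    rintro k ⟨S, rfl, h1, h2⟩
    have := Besicovitch.card_le_of_separated S h1 h2
    simpa using this
  have h0 : P 0 := ⟨∅, by simp⟩
  have hg : P (Nat.findGreatest P (5 ^ n)) := Nat.findGreatest_spec (Nat.zero_le _) h0
  obtain ⟨S, hc, h1, h2⟩ := hg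
  refine ⟨S, hc ▸ Nat.findGreatest_le _, h1, ?_⟩
  intro y hy
  by_contra! hcon
  have hyS : y ∉ S := fun h => by
    have := hcon y h
    simp at this
    linarith
  have hP : P (S.card + 1) := by
    refine ⟨insert y S, Finset.card_insert_of_notMem hyS, ?_, ?_⟩
    · intro c hc
      rcases Finset.mem_insert.1 hc with rfl | h
      · exact hy
      · exact h1 c h
    · intro c hc d hd hcd
      rcases Finset.mem_insert.1 hc with rfl | h <;> rcases Finset.mem_insert.1 hd with rfl | h'
      · exact absurd rfl hcd
      · exact hcon d h'
      · rw [norm_sub_rev]; exact hcon c h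
      · exact h2 c h d h' hcd
  have := Nat.le_findGreatest (hb _ hP) hP
  omega

lemma const_bound {n : ℕ} (hn : 0 < n) {s : ℝ} (hs : 2 ≤ s) :
    5 * Real.exp 1 * n / rr n s ≤ (13 * (Real.sqrt s * Real.sqrt n)) ^ s := by
  have hs0 : 0 < s := by linarith
  have hn' : (0 : ℝ) < n := by exact_mod_cast hn
  have he := Real.exp_pos 1
  have e1 : 5 * Real.exp 1 * n / rr n s = 20 * Real.exp 1 * ((Real.exp 1 * n) ^ (s / 2) * s ^ (s / 2)) := by
    unfold rr
    rw [div_inv_eq_mul]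
    have : (Real.exp 1 * (n : ℝ)) ^ (s / 2) = (Real.exp 1 * n) ^ (s / 2 - 1) * (Real.exp 1 * n) := by
      rw [← Real.rpow_add_one (by positivity)]; congr 1; ring
    rw [this]; ring
  have e2 : (13 * (Real.sqrt s * Real.sqrt n)) ^ s = (169 * (s * n)) ^ (s / 2) := by
    have h : 13 * (Real.sqrt s * Real.sqrt n) = (169 * (s * n)) ^ (1 / 2 : ℝ) := by
      rw [← Real.sqrt_eq_rpow, Real.sqrt_mul (by norm_num), Real.sqrt_mul hs0.le]
      congr 1
      rw [show (169 : ℝ) = 13 ^ 2 by norm_num, Real.sqrt_sq (by norm_num)]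
    rw [h, ← Real.rpow_mul (by positivity)]
    congr 1; ring
  have e3 : 20 * Real.exp 1 ≤ (20 * Real.exp 1) ^ (s / 2) := by
    have h1 : 1 ≤ 20 * Real.exp 1 := by linarith [Real.add_one_le_exp (1 : ℝ)]
    calc 20 * Real.exp 1 = (20 * Real.exp 1) ^ (1 : ℝ) := (Real.rpow_one _).symm
      _ ≤ _ := Real.rpow_le_rpow_of_exponent_le h1 (by linarith)
  rw [e1, e2]
  calc _ ≤ (20 * Real.exp 1) ^ (s / 2) * ((Real.exp 1 * n) ^ (s / 2) * s ^ (s / 2)) := by gcongr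
    _ = (20 * Real.exp 1 * (Real.exp 1 * n * s)) ^ (s / 2) := by
      rw [← Real.mul_rpow (by positivity) (by positivity), ← Real.mul_rpow (by positivity) (by positivity)]
    _ ≤ _ := by
      refine Real.rpow_le_rpow (by positivity) ?_ (by linarith)
      have h : Real.exp 1 * Real.exp 1 ≤ 8 := by nlinarith [Real.exp_one_lt_d9]
      have : 0 ≤ s * n := by positivity
      nlinarith

lemma exists_signs {n m : ℕ} (hn : 0 < n) {s : ℝ} (hs : 2 ≤ s) (hm : (m : ℝ) ≤ (n : ℝ) ^ (s / 2))
    (S : Finset (EuclideanSpace ℝ (Fin n))) (hS : S.card ≤ 5 ^ n) (hS2 : ∀ c ∈ S, ‖c‖ ≤ 2) :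
    ∃ V : Fin m → Fin n → Bool, ∀ c ∈ S,
      ∑ j, |∑ i, sg (V j i) * (c i / 2)| ^ s ≤ (13 * (Real.sqrt s * Real.sqrt n)) ^ s := by
  have hs0 : 0 < s := by linarith
  have hn' : (0 : ℝ) < n := by exact_mod_cast hn
  have hr : 0 < rr n s := by unfold rr; positivity
  have key : ∀ c ∈ S, ∑ V : Fin m → Fin n → Bool,
      ∏ j, TE n (rr n s * |∑ i, sg (V j i) * (c i / 2)| ^ s) ≤ (2 ^ n) ^ m * Real.exp 1 ^ n := by
    intro c hc
    rw [← Fintype.sum_pow (fun ε : Fin n → Bool => TE n (rr n s * |∑ i, sg (ε i) * (c i / 2)| ^ s)) m]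
    have hy : ∑ i, (c i / 2) ^ 2 ≤ 1 := by
      have h := hS2 c hc
      have h2 : ‖c‖ ^ 2 ≤ 4 := by nlinarith [norm_nonneg c]
      rw [EuclideanSpace.norm_sq_eq] at h2
      simp only [Real.norm_eq_abs, sq_abs] at h2
      simp_rw [div_pow]
      rw [← Finset.sum_div]
      linarith
    have mb := mean_bound hn hs (fun i => c i / 2) hy
    have nn : 0 ≤ ∑ ε : Fin n → Bool, TE n (rr n s * |∑ i, sg (ε i) * (c i / 2)| ^ s) :=
      Finset.sum_nonneg fun ε _ => TE_nonneg n (by positivity)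
    refine (pow_le_pow_left₀ nn mb m).trans ?_
    rw [mul_pow]
    gcongr
    rw [← Real.exp_nat_mul, mul_one]
    have h1 : 1 + ((n : ℝ) ^ (s / 2 - 1))⁻¹ ≤ Real.exp (((n : ℝ) ^ (s / 2 - 1))⁻¹) := by
      linarith [Real.add_one_le_exp (((n : ℝ) ^ (s / 2 - 1))⁻¹)]
    refine (pow_le_pow_left₀ (by positivity) h1 m).trans ?_
    rw [← Real.exp_nat_mul]
    gcongr
    rw [← div_eq_mul_inv, div_le_iff₀ (by positivity)]
    refine hm.trans (le_of_eq ?_)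
    rw [mul_comm, ← Real.rpow_add_one hn'.ne']
    congr 1; ring
  have hsum : ∑ V : Fin m → Fin n → Bool, ∑ c ∈ S,
      ∏ j, TE n (rr n s * |∑ i, sg (V j i) * (c i / 2)| ^ s) ≤
      ∑ V : Fin m → Fin n → Bool, (5 * Real.exp 1) ^ n := by
    rw [Finset.sum_comm]
    refine (Finset.sum_le_sum key).trans ?_
    simp only [Finset.sum_const, Finset.card_univ, nsmul_eq_mul, Fintype.card_fun,
      Fintype.card_bool, Fintype.card_fin]
    push_cast
    have hS' : (S.card : ℝ) ≤ 5 ^ n := by exact_mod_cast hS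
    rw [mul_pow]
    calc (S.card : ℝ) * ((2 ^ n) ^ m * Real.exp 1 ^ n) ≤ 5 ^ n * ((2 ^ n) ^ m * Real.exp 1 ^ n) := by
          gcongr
      _ = _ := by ring
  obtain ⟨V, -, hV⟩ := Finset.exists_le_of_sum_le Finset.univ_nonempty hsum
  refine ⟨V, fun c hc => ?_⟩
  set F := ∑ j, |∑ i, sg (V j i) * (c i / 2)| ^ s with hF
  have hF0 : 0 ≤ F := Finset.sum_nonneg fun j _ => by positivity
  have hTp : ∀ d : EuclideanSpace ℝ (Fin n), 0 ≤ ∏ j, TE n (rr n s * |∑ i, sg (V j i) * (d i / 2)| ^ s) :=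
    fun d => Finset.prod_nonneg fun j _ => TE_nonneg n (by positivity)
  have h1 : ∏ j, TE n (rr n s * |∑ i, sg (V j i) * (c i / 2)| ^ s) ≤ (5 * Real.exp 1) ^ n :=
    (Finset.single_le_sum (fun d _ => hTp d) hc).trans hV
  have h2 : TE n (rr n s * F) ≤ (5 * Real.exp 1) ^ n := by
    rw [hF, Finset.mul_sum]
    exact (TE_sum n _ _ fun j => by positivity).trans h1
  have h3 := (pow_le_TE n (x := rr n s * F) (by positivity)).trans h2
  rw [div_le_iff₀ (by positivity)] at h3
  have h4 : ((n.factorial : ℕ) : ℝ) ≤ (n : ℝ) ^ n := by exact_mod_cast Nat.factorial_le_pow n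
  have h5 : (rr n s * F) ^ n ≤ (5 * Real.exp 1 * n) ^ n := by
    rw [mul_pow (5 * Real.exp 1)]
    exact h3.trans (by gcongr)
  have h6 : rr n s * F ≤ 5 * Real.exp 1 * n := le_of_pow_le_pow_left₀ hn.ne' (by positivity) h5
  refine le_trans ?_ (const_bound hn hs)
  rw [le_div_iff₀ hr]
  linarith

lemma random_matrix {n m : ℕ} (hn : 0 < n) {s : ℝ} (hs : 2 ≤ s) (hm : (m : ℝ) ≤ (n : ℝ) ^ (s / 2)) :
    ∃ σ : Fin m → Fin n → ℝ, (∀ j i, σ j i ^ 2 = 1) ∧ ∀ y : EuclideanSpace ℝ (Fin n),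
      (∑ j, |∑ i, σ j i * y i| ^ s) ^ (1 / s) ≤ 26 * (Real.sqrt s * Real.sqrt n) * ‖y‖ := by
  have hs0 : 0 < s := by linarith
  obtain ⟨S, hc, h2, hnet⟩ := exists_net n
  obtain ⟨V, hV⟩ := exists_signs hn hs hm S hc h2
  refine ⟨fun j i => sg (V j i), fun j i => by cases h : V j i <;> simp [sg, h], ?_⟩
  have : Fact (1 ≤ ENNReal.ofReal s) := ⟨by
    rw [← ENNReal.ofReal_one]; exact ENNReal.ofReal_le_ofReal (by linarith)⟩
  let L0 : EuclideanSpace ℝ (Fin n) →ₗ[ℝ] PiLp (ENNReal.ofReal s) (fun _ : Fin m => ℝ) :=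
    { toFun := fun y => WithLp.toLp _ fun j => ∑ i, sg (V j i) * y i
      map_add' := by
        intro x y
        ext j
        simp [mul_add, Finset.sum_add_distrib]
      map_smul' := by
        intro c x
        ext j
        simp only [PiLp.smul_apply, smul_eq_mul, RingHom.id_apply, Finset.mul_sum]
        refine Finset.sum_congr rfl fun i _ => by ring }
  let L := LinearMap.toContinuousLinearMap L0
  have hL : ∀ y, ‖L y‖ = (∑ j, |∑ i, sg (V j i) * y i| ^ s) ^ (1 / s) := by
    intro y
    rw [PiLp.norm_eq_sum (by rw [ENNReal.toReal_ofReal hs0.le]; exact hs0), ENNReal.toReal_ofReal hs0.le]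
    rfl
  set B := 26 * (Real.sqrt s * Real.sqrt n) with hB
  have hnetb : ∀ c ∈ S, ‖L c‖ ≤ B := by
    intro c hc
    have e : ‖L c‖ = 2 * ‖L ((1 / 2 : ℝ) • c)‖ := by
      rw [map_smul, norm_smul]
      norm_num
      ring
    have : ‖L ((1 / 2 : ℝ) • c)‖ ≤ 13 * (Real.sqrt s * Real.sqrt n) := by
      rw [hL]
      have h := hV c hc
      have h' := Real.rpow_le_rpow (Finset.sum_nonneg fun j _ => by positivity) h
        (by positivity : 0 ≤ 1 / s)
      rw [← Real.rpow_mul (by positivity), mul_one_div_cancel hs0.ne', Real.rpow_one] at h'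
      refine le_trans (le_of_eq ?_) h'
      congr 1
      refine Finset.sum_congr rfl fun j _ => ?_
      congr 2
      refine Finset.sum_congr rfl fun i _ => ?_
      simp only [PiLp.smul_apply, smul_eq_mul]
      ring
    rw [e, hB]; linarith
  have hb : ‖L‖ ≤ (B + ‖L‖) / 2 := by
    refine ContinuousLinearMap.opNorm_le_bound _ (by positivity) fun y => ?_
    by_cases hy : y = 0
    · subst hy; simp
    have hy' : 0 < ‖y‖ := norm_pos_iff.2 hy
    have hz : ‖(2 / ‖y‖) • y‖ = 2 := by
      rw [norm_smul, Real.norm_of_nonneg (by positivity)]; field_simp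
    obtain ⟨c, hcS, hcd⟩ := hnet ((2 / ‖y‖) • y) hz.le
    have h1 : ‖L ((2 / ‖y‖) • y)‖ ≤ B + ‖L‖ := by
      have : L ((2 / ‖y‖) • y) = L c + L ((2 / ‖y‖) • y - c) := by rw [← map_add]; congr 1; abel
      rw [this]
      refine (norm_add_le _ _).trans (add_le_add (hnetb c hcS) ?_)
      refine (L.le_opNorm _).trans ?_
      nlinarith [norm_nonneg L]
    rw [map_smul, norm_smul, Real.norm_of_nonneg (by positivity), div_mul_eq_mul_div,
      div_le_iff₀ hy'] at h1
    linarith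
  have hLB : ‖L‖ ≤ B := by linarith
  intro y
  rw [← hL]
  exact (L.le_opNorm y).trans (by gcongr)

lemma holder_gen {ι : Type*} (S : Finset ι) (f g : ι → ℝ) (hf : ∀ i, 0 ≤ f i) (hg : ∀ i, 0 ≤ g i)
    {a b : ℝ} (ha : 0 ≤ a) (hb : 0 ≤ b) (hab : a + b = 1) :
    ∑ i ∈ S, f i ^ a * g i ^ b ≤ (∑ i ∈ S, f i) ^ a * (∑ i ∈ S, g i) ^ b := by
  rcases ha.eq_or_lt with rfl | ha
  · have : b = 1 := by linarith
    subst this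
    simp
  rcases hb.eq_or_lt with rfl | hb
  · have : a = 1 := by linarith
    subst this
    simp
  have hc : (a⁻¹).HolderConjugate b⁻¹ := by
    rw [Real.holderConjugate_iff]
    refine ⟨(one_lt_inv₀ ha).2 (by linarith), by simpa using hab⟩
  have h := Real.inner_le_Lp_mul_Lq_of_nonneg S hc (f := fun i => f i ^ a) (g := fun i => g i ^ b)
    (fun i _ => Real.rpow_nonneg (hf i) _) (fun i _ => Real.rpow_nonneg (hg i) _)
  refine h.trans (le_of_eq ?_)
  simp only [one_div, inv_inv]
  congr 2
  · refine Finset.sum_congr rfl fun i _ => ?_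
    rw [← Real.rpow_mul (hf i), mul_inv_cancel₀ ha.ne', Real.rpow_one]
  · refine Finset.sum_congr rfl fun i _ => ?_
    rw [← Real.rpow_mul (hg i), mul_inv_cancel₀ hb.ne', Real.rpow_one]

lemma exists_good_signs {ι κ : Type*} [Fintype κ] (S : Finset ι) (u : ι → κ → ℝ) :
    ∃ η : ι → ℝ, (∀ k, |η k| = 1) ∧
      ∑ k ∈ S, ∑ j, u k j ^ 2 ≤ ∑ j, (∑ k ∈ S, η k * u k j) ^ 2 := by
  classical
  induction S using Finset.induction_on with
  | empty => exact ⟨fun _ => 1, by simp, by simp⟩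
  | insert a S ha ih =>
    obtain ⟨η, h1, h2⟩ := ih
    set w : κ → ℝ := fun j => ∑ k ∈ S, η k * u k j with hw
    have hδ : ∃ δ : ℝ, |δ| = 1 ∧ 0 ≤ δ * ∑ j, u a j * w j := by
      rcases le_total 0 (∑ j, u a j * w j) with h | h
      · exact ⟨1, by simp, by simpa using h⟩
      · exact ⟨-1, by simp, by linarith⟩
    obtain ⟨δ, hδ1, hδ2⟩ := hδ
    have hδsq : δ ^ 2 = 1 := by rw [← sq_abs, hδ1]; norm_num
    refine ⟨Function.update η a δ, ?_, ?_⟩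
    · intro k
      by_cases hk : k = a
      · subst hk; simpa using hδ1
      · simpa [Function.update_of_ne hk] using h1 k
    · rw [Finset.sum_insert ha]
      have e : ∀ j, ∑ k ∈ insert a S, Function.update η a δ k * u k j = δ * u a j + w j := by
        intro j
        rw [Finset.sum_insert ha, Function.update_self]
        congr 1
        refine Finset.sum_congr rfl fun k hk => ?_
        have hne : k ≠ a := by rintro rfl; exact ha hk
        rw [Function.update_of_ne hne]
      simp_rw [e]
      have e2 : ∑ j, (δ * u a j + w j) ^ 2 =
          ∑ j, u a j ^ 2 + 2 * (δ * ∑ j, u a j * w j) + ∑ j, w j ^ 2 := by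
        rw [Finset.mul_sum, Finset.mul_sum, ← Finset.sum_add_distrib, ← Finset.sum_add_distrib]
        refine Finset.sum_congr rfl fun j _ => ?_
        have : (δ * u a j + w j) ^ 2 = δ ^ 2 * u a j ^ 2 + 2 * (δ * (u a j * w j)) + w j ^ 2 := by ring
        rw [this, hδsq, one_mul]
      rw [e2]
      linarith

section det
variable {K m : ℕ} (x : Fin K → Fin m → ℝ) {q : ℝ}

lemma col_bound (hq1 : 1 ≤ q)
    (H : ∀ f : Fin m → ℝ, ∑ k, |∑ j, f j * x k j| ^ q ≤ ∑ j, |f j| ^ q) :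
    ∑ k, ∑ j, |x k j| ^ q ≤ m := by
  rw [Finset.sum_comm]
  have : ∀ j, ∑ k, |x k j| ^ q ≤ 1 := by
    intro j
    have h := H (Pi.single j 1)
    have e1 : ∀ k, ∑ i, (Pi.single j (1 : ℝ) : Fin m → ℝ) i * x k i = x k j := by
      intro k
      rw [Finset.sum_eq_single j]
      · simp
      · intro b _ hb; simp [hb]
      · simp
    have e2 : ∑ i, |(Pi.single j (1 : ℝ) : Fin m → ℝ) i| ^ q = 1 := by
      rw [Finset.sum_eq_single j]
      · simp
      · intro b _ hb; simp [hb]; exact Real.zero_rpow (by linarith)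
      · simp
    simp_rw [e1] at h
    rwa [e2] at h
  refine (Finset.sum_le_sum fun j _ => this j).trans ?_
  simp

lemma row_bound (hq1 : 1 ≤ q) (hq2 : q < 2)
    (H : ∀ f : Fin m → ℝ, ∑ k, |∑ j, f j * x k j| ^ q ≤ ∑ j, |f j| ^ q) {τ : ℝ} (hτ : 0 < τ)
    (hτq : 1 / (2 * τ) = 1 / q - 1 / 2) :
    ∑ k, (∑ j, x k j ^ 2) ^ τ ≤ m := by
  have hq0 : 0 < q := by linarith
  set B : Fin K → ℝ := fun k => ∑ j, x k j ^ 2 with hB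
  have hB0 : ∀ k, 0 ≤ B k := fun k => Finset.sum_nonneg fun j _ => sq_nonneg _
  set S := ∑ k, B k ^ τ with hS
  have hS0 : 0 ≤ S := Finset.sum_nonneg fun k _ => Real.rpow_nonneg (hB0 k) _
  rcases hS0.eq_or_lt with hz | hSpos
  · rw [← hz]; positivity
  set c : Fin K → ℝ := fun k => (B k ^ τ) ^ (1 - 1 / q) with hc
  have hc0 : ∀ k, 0 ≤ c k := fun k => Real.rpow_nonneg (Real.rpow_nonneg (hB0 k) _) _
  have hcB : ∀ k, c k ^ 2 * B k = B k ^ τ := by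
    intro k
    rcases (hB0 k).eq_or_lt with h | h
    · rw [← h, Real.zero_rpow hτ.ne', mul_zero]
    · rw [hc]
      simp only
      rw [← Real.rpow_mul h.le, ← Real.rpow_natCast, ← Real.rpow_mul h.le]
      nth_rewrite 2 [← Real.rpow_one (B k)]
      rw [← Real.rpow_add h]
      congr 1
      have h3 : 1 / q = 1 / (2 * τ) + 1 / 2 := by linarith
      rw [h3]
      push_cast
      field_simp
      ring
  obtain ⟨η, hη1, hη2⟩ := exists_good_signs Finset.univ (fun k j => c k * x k j)
  set w : Fin m → ℝ := fun j => ∑ k, η k * (c k * x k j) with hw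
  set W := ∑ j, w j ^ 2 with hW
  have hSW : S ≤ W := by
    refine le_trans (le_of_eq ?_) hη2
    refine Finset.sum_congr rfl fun k _ => ?_
    rw [← hcB k, hB]
    simp only
    rw [Finset.mul_sum]
    refine Finset.sum_congr rfl fun j _ => by ring
  have hWpos : 0 < W := hSpos.trans_le hSW
  have h1 : W ≤ ∑ k, c k * |∑ j, w j * x k j| := by
    have e : W = ∑ k, η k * (c k * ∑ j, w j * x k j) := by
      rw [hW]
      simp_rw [Finset.mul_sum]
      rw [Finset.sum_comm]
      refine Finset.sum_congr rfl fun j _ => ?_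
      rw [sq]
      nth_rewrite 1 [hw]
      simp only
      rw [Finset.sum_mul]
      refine Finset.sum_congr rfl fun k _ => by ring
    rw [e]
    refine Finset.sum_le_sum fun k _ => ?_
    refine (le_abs_self _).trans ?_
    rw [abs_mul, hη1, one_mul, abs_mul, abs_of_nonneg (hc0 k)]
  have h2 : ∑ k, c k * |∑ j, w j * x k j| ≤
      S ^ (1 - 1 / q) * (∑ k, |∑ j, w j * x k j| ^ q) ^ (1 / q) := by
    have := holder_gen Finset.univ (fun k => B k ^ τ) (fun k => |∑ j, w j * x k j| ^ q)
      (fun k => Real.rpow_nonneg (hB0 k) _) (fun k => by positivity)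
      (a := 1 - 1 / q) (b := 1 / q) (by
        have : 1 / q ≤ 1 := by rw [div_le_one hq0]; exact hq1
        linarith) (by positivity) (by ring)
    refine le_trans (le_of_eq ?_) this
    refine Finset.sum_congr rfl fun k _ => ?_
    congr 1
    rw [← Real.rpow_mul (abs_nonneg _), mul_one_div_cancel hq0.ne', Real.rpow_one]
  have h3 : ∑ j, |w j| ^ q ≤ (m : ℝ) ^ (1 - q / 2) * W ^ (q / 2) := by
    have := holder_gen Finset.univ (fun _ : Fin m => (1 : ℝ)) (fun j => w j ^ 2)
      (fun k => zero_le_one) (fun k => by positivity)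
      (a := 1 - q / 2) (b := q / 2) (by linarith) (by positivity) (by ring)
    simp only [Real.one_rpow, one_mul, Finset.sum_const, Finset.card_univ, Fintype.card_fin,
      nsmul_eq_mul, mul_one] at this
    refine le_trans (le_of_eq ?_) this
    refine Finset.sum_congr rfl fun j _ => ?_
    rw [← sq_abs, ← Real.rpow_natCast, ← Real.rpow_mul (abs_nonneg _)]
    congr 1; push_cast; ring
  have h4 : (∑ k, |∑ j, w j * x k j| ^ q) ^ (1 / q) ≤ (m : ℝ) ^ (1 / q - 1 / 2) * W ^ (1 / 2 : ℝ) := by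
    refine (Real.rpow_le_rpow (Finset.sum_nonneg fun k _ => by positivity) ((H w).trans h3)
      (by positivity)).trans (le_of_eq ?_)
    rw [Real.mul_rpow (by positivity) (by positivity), ← Real.rpow_mul (by positivity),
      ← Real.rpow_mul (by positivity)]
    congr 2 <;> field_simp
  have h5 : W ≤ S ^ (1 - 1 / q) * ((m : ℝ) ^ (1 / q - 1 / 2) * W ^ (1 / 2 : ℝ)) :=
    h1.trans (h2.trans (by gcongr))
  have hWW : W = W ^ (1 / 2 : ℝ) * W ^ (1 / 2 : ℝ) := by
    rw [← Real.rpow_add hWpos]; norm_num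
  have h6 : W ^ (1 / 2 : ℝ) ≤ S ^ (1 - 1 / q) * (m : ℝ) ^ (1 / q - 1 / 2) := by
    have : 0 < W ^ (1 / 2 : ℝ) := by positivity
    nlinarith
  have h7 : S ^ (1 / 2 : ℝ) ≤ S ^ (1 - 1 / q) * (m : ℝ) ^ (1 / q - 1 / 2) :=
    (Real.rpow_le_rpow hS0 hSW (by norm_num)).trans h6
  have h8 : S ^ (1 / q - 1 / 2) ≤ (m : ℝ) ^ (1 / q - 1 / 2) := by
    have e : S ^ (1 / 2 : ℝ) = S ^ (1 - 1 / q) * S ^ (1 / q - 1 / 2) := by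
      rw [← Real.rpow_add hSpos]; congr 1; ring
    rw [e] at h7
    exact le_of_mul_le_mul_left h7 (by positivity)
  have hpos : 0 < 1 / q - 1 / 2 := by rw [← hτq]; positivity
  exact (Real.rpow_le_rpow_iff hS0 (by positivity) hpos).1 h8

lemma det_bound (hq1 : 1 ≤ q) (hq2 : q ≤ 2)
    (H : ∀ f : Fin m → ℝ, ∑ k, |∑ j, f j * x k j| ^ q ≤ ∑ j, |f j| ^ q)
    {θ σ t : ℝ} (hθ0 : 0 < θ) (hθ1 : θ < 1) (hσ : 0 < σ) (hσe : 1 / σ = (1 - θ) / q + θ / 2)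
    (ht : 0 < t) (hte : 1 / t = 1 / q - θ / 2) :
    ∑ k, (∑ j, |x k j| ^ σ) ^ (t / σ) ≤ m := by
  have hq0 : 0 < q := by linarith
  have hcol := col_bound x hq1 H
  rcases hq2.lt_or_eq with hq2 | hq2
  · have hpos : 0 < 1 / q - 1 / 2 := by
      have : 1 / 2 < 1 / q := by gcongr
      linarith
    set τ := (2 * (1 / q - 1 / 2))⁻¹ with hτ
    have hτ0 : 0 < τ := by positivity
    have hτq : 1 / (2 * τ) = 1 / q - 1 / 2 := by
      rw [hτ]; field_simp
    have hrow := row_bound x hq1 hq2 H hτ0 hτq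
    set A : Fin K → ℝ := fun k => ∑ j, |x k j| ^ q with hA
    set B : Fin K → ℝ := fun k => ∑ j, x k j ^ 2 with hB
    have hB0 : ∀ k, 0 ≤ B k := fun k => Finset.sum_nonneg fun j _ => sq_nonneg _
    have hA0 : ∀ k, 0 ≤ A k := fun k => Finset.sum_nonneg fun j _ => by positivity
    have hθ1' : 0 < 1 - θ := by linarith
    have hs1 : σ * ((1 - θ) / q) + σ * (θ / 2) = 1 := by
      rw [← mul_add, ← hσe, mul_one_div_cancel hσ.ne']
    have i1 : ∀ k, ∑ j, |x k j| ^ σ ≤ A k ^ (σ * ((1 - θ) / q)) * B k ^ (σ * (θ / 2)) := by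
      intro k
      have := holder_gen Finset.univ (fun j => |x k j| ^ q) (fun j => x k j ^ 2)
        (fun j => by positivity) (fun j => by positivity)
        (a := σ * ((1 - θ) / q)) (b := σ * (θ / 2)) (by positivity) (by positivity) hs1
      refine le_trans (Finset.sum_le_sum fun j _ => le_of_eq ?_) this
      rcases (abs_nonneg (x k j)).eq_or_lt with h | h
      · have h0 : x k j = 0 := abs_eq_zero.1 h.symm
        simp only [h0, abs_zero]
        rw [Real.zero_rpow hσ.ne', Real.zero_rpow hq0.ne',
          Real.zero_rpow (by positivity : σ * ((1 - θ) / q) ≠ 0), zero_mul]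
      · rw [← sq_abs, ← Real.rpow_natCast, ← Real.rpow_mul h.le, ← Real.rpow_mul h.le,
          ← Real.rpow_add h]
        congr 1
        push_cast
        field_simp
        ring
    have ht1 : t * ((1 - θ) / q) + t * (θ * (1 / q - 1 / 2)) = 1 := by
      have : t * (1 / q - θ / 2) = 1 := by rw [← hte, mul_one_div_cancel ht.ne']
      linear_combination this
    have i2 : ∀ k, (∑ j, |x k j| ^ σ) ^ (t / σ) ≤
        A k ^ (t * ((1 - θ) / q)) * (B k ^ τ) ^ (t * (θ * (1 / q - 1 / 2))) := by
      intro k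
      refine (Real.rpow_le_rpow (Finset.sum_nonneg fun j _ => by positivity) (i1 k)
        (by positivity)).trans (le_of_eq ?_)
      rw [Real.mul_rpow (Real.rpow_nonneg (hA0 k) _) (Real.rpow_nonneg (hB0 k) _),
        ← Real.rpow_mul (hA0 k), ← Real.rpow_mul (hB0 k), ← Real.rpow_mul (hB0 k)]
      congr 2
      · field_simp
      · rw [← hτq]; field_simp
    refine (Finset.sum_le_sum fun k _ => i2 k).trans ?_
    refine (holder_gen Finset.univ A (fun k => B k ^ τ) hA0 (fun k => Real.rpow_nonneg (hB0 k) _)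
      (by positivity) (by positivity) ht1).trans ?_
    have hSA : 0 ≤ ∑ k, A k := Finset.sum_nonneg fun k _ => hA0 k
    have hSB : 0 ≤ ∑ k, B k ^ τ := Finset.sum_nonneg fun k _ => Real.rpow_nonneg (hB0 k) _
    calc _ ≤ (m : ℝ) ^ (t * ((1 - θ) / q)) * (m : ℝ) ^ (t * (θ * (1 / q - 1 / 2))) := by
          gcongr
      _ = m := by
          rw [← Real.rpow_add_of_nonneg (by positivity) (by positivity) (by positivity), ht1,
            Real.rpow_one]
  · subst hq2
    have hσ2 : σ = 2 := by
      have : 1 / σ = 1 / 2 := by rw [hσe]; ring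
      field_simp at this
      linarith
    subst hσ2
    have ht2 : 1 ≤ t / 2 := by
      have : 1 / t ≤ 1 / 2 := by rw [hte]; linarith
      rw [div_le_div_iff₀ ht (by norm_num)] at this
      linarith
    refine le_trans (Finset.sum_le_sum fun k _ => ?_) hcol
    have hB0 : 0 ≤ ∑ j, |x k j| ^ (2 : ℝ) := Finset.sum_nonneg fun j _ => by positivity
    have hB1 : ∑ j, |x k j| ^ (2 : ℝ) ≤ 1 := by
      have h := (Finset.single_le_sum (f := fun l => |∑ j, x k j * x l j| ^ (2 : ℝ))
        (fun l _ => by positivity) (Finset.mem_univ k)).trans (H (x k))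
      have e : ∑ j, x k j * x k j = ∑ j, |x k j| ^ (2 : ℝ) := by
        refine Finset.sum_congr rfl fun j _ => ?_
        rw [Real.rpow_two, sq_abs, sq]
      rw [e, abs_of_nonneg hB0, Real.rpow_two] at h
      nlinarith
    calc _ ≤ (∑ j, |x k j| ^ (2 : ℝ)) ^ (1 : ℝ) :=
          Real.rpow_le_rpow_of_exponent_ge_of_imp hB0 hB1 ht2 (by intro _ h; linarith)
      _ = _ := Real.rpow_one _
end det

lemma eSum_ofReal {p : ℝ} (hp : 0 < p) {ι : Type*} [Fintype ι] (a : ι → ℝ) (ha : ∀ i, 0 ≤ a i) :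
    eSum (ENNReal.ofReal p) (fun i => ENNReal.ofReal (a i)) =
      ENNReal.ofReal ((∑ i, a i ^ p) ^ (1 / p)) := by
  unfold eSum
  rw [if_neg ENNReal.ofReal_ne_top, ENNReal.toReal_ofReal hp.le]
  rw [← ENNReal.ofReal_rpow_of_nonneg (Finset.sum_nonneg fun i _ => Real.rpow_nonneg (ha i) _)
    (by positivity), ENNReal.ofReal_sum_of_nonneg (fun i _ => Real.rpow_nonneg (ha i) _)]
  congr 1
  refine Finset.sum_congr rfl fun i _ => ?_
  rw [ENNReal.ofReal_rpow_of_nonneg (ha i) hp.le]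

lemma conj_cases {q : ℝ} {q' : ℝ≥0∞} (hq1 : 1 ≤ q) (h : 1 / ENNReal.ofReal q + 1 / q' = 1) :
    (q = 1 ∧ q' = ∞) ∨ (0 < q'.toReal ∧ q.HolderConjugate q'.toReal) := by
  have hq0 : 0 < q := by linarith
  have hqq : (1 / ENNReal.ofReal q) = ENNReal.ofReal (1 / q) := by
    rw [one_div, one_div, ENNReal.ofReal_inv_of_pos hq0]
  have hr : 1 / q + (1 / q').toReal = 1 := by
    have h2 : 1 / q' ≠ ∞ := by
      intro h3; rw [h3] at h; simp at h
    have := congrArg ENNReal.toReal h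
    rw [hqq, ENNReal.toReal_add ENNReal.ofReal_ne_top h2, ENNReal.toReal_ofReal (by positivity)] at this
    simpa using this
  rcases hq1.eq_or_lt with rfl | hq
  · left
    refine ⟨rfl, ?_⟩
    simp at h
    exact h
  · right
    have hq' : 1 / q < 1 := by rw [div_lt_one hq0]; exact hq
    have e : (1 / q').toReal = q'.toReal⁻¹ := by simp
    rw [e] at hr
    have hpos : 0 < q'.toReal⁻¹ := by linarith
    refine ⟨inv_pos.1 hpos, ?_⟩
    rw [Real.holderConjugate_iff]
    refine ⟨hq, by rw [← hr, one_div]⟩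

lemma conj_toReal {q : ℝ} {q' : ℝ≥0∞} (hq1 : 1 ≤ q) (h : 1 / ENNReal.ofReal q + 1 / q' = 1) :
    (1 / q').toReal = 1 - 1 / q := by
  rcases conj_cases hq1 h with ⟨rfl, rfl⟩ | ⟨_, h2⟩
  · simp
  · have := (Real.holderConjugate_iff.1 h2).2
    simp
    linarith

section fun_an
variable {q : ℝ} {q' : ℝ≥0∞} [Fact (1 ≤ q')] {m : ℕ}

lemma holder_pilp (hq1 : 1 ≤ q) (h : 1 / ENNReal.ofReal q + 1 / q' = 1)
    (f : Fin m → ℝ) (z : PiLp q' (fun _ : Fin m => ℝ)) :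
    |∑ j, f j * z j| ≤ (∑ j, |f j| ^ q) ^ (1 / q) * ‖z‖ := by
  have h0 : |∑ j, f j * z j| ≤ ∑ j, |f j| * |z j| := by
    refine (Finset.abs_sum_le_sum_abs _ _).trans (le_of_eq ?_)
    simp_rw [abs_mul]
  refine h0.trans ?_
  rcases conj_cases hq1 h with ⟨rfl, rfl⟩ | ⟨hp, h2⟩
  · simp only [Real.rpow_one, one_div, inv_one]
    rw [Finset.sum_mul]
    refine Finset.sum_le_sum fun j _ => ?_
    gcongr
    exact PiLp.norm_apply_le z j
  · rw [PiLp.norm_eq_sum hp]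
    exact Real.inner_le_Lp_mul_Lq_of_nonneg Finset.univ h2 (fun j _ => abs_nonneg _)
      (fun j _ => abs_nonneg _)

/-- the functional given by a coefficient vector -/
noncomputable def coefFun (q' : ℝ≥0∞) [Fact (1 ≤ q')] {m : ℕ} (f : Fin m → ℝ) :
    PiLp q' (fun _ : Fin m => ℝ) →L[ℝ] ℝ :=
  LinearMap.toContinuousLinearMap
    { toFun := fun z => ∑ j, f j * z j
      map_add' := by intro x y; simp [mul_add, Finset.sum_add_distrib]
      map_smul' := by
        intro c x
        simp only [PiLp.smul_apply, smul_eq_mul, RingHom.id_apply, Finset.mul_sum]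
        refine Finset.sum_congr rfl fun i _ => by ring }

lemma coefFun_apply (f : Fin m → ℝ) (z : PiLp q' (fun _ : Fin m => ℝ)) :
    coefFun q' f z = ∑ j, f j * z j := rfl

lemma weak_upper (hq1 : 1 ≤ q) (h : 1 / ENNReal.ofReal q + 1 / q' = 1) {K : ℕ}
    (x : Fin K → PiLp q' (fun _ : Fin m => ℝ)) (hx : weakLq (ENNReal.ofReal q) x ≤ 1)
    (f : Fin m → ℝ) : ∑ k, |∑ j, f j * x k j| ^ q ≤ ∑ j, |f j| ^ q := by
  have hq0 : 0 < q := by linarith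
  set S := ∑ j, |f j| ^ q with hS
  have hS0 : 0 ≤ S := Finset.sum_nonneg fun j _ => by positivity
  rcases hS0.eq_or_lt with hz | hSpos
  · have hf : ∀ j, f j = 0 := by
      intro j
      have := (Finset.sum_eq_zero_iff_of_nonneg (fun j _ => by positivity)).1 hz.symm j (Finset.mem_univ j)
      by_contra hne
      have : 0 < |f j| ^ q := by have := abs_pos.2 hne; positivity
      linarith
    rw [← hz]
    simp [hf, Real.zero_rpow hq0.ne']
  set N := S ^ (1 / q) with hN
  have hN0 : 0 < N := by positivity
  have hNq : N ^ q = S := by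
    rw [hN, ← Real.rpow_mul hS0, one_div_mul_cancel hq0.ne', Real.rpow_one]
  have hnorm : ‖N⁻¹ • coefFun q' f‖ ≤ 1 := by
    refine ContinuousLinearMap.opNorm_le_bound _ zero_le_one fun z => ?_
    rw [ContinuousLinearMap.smul_apply, norm_smul, coefFun_apply, Real.norm_of_nonneg (by positivity),
      one_mul, Real.norm_eq_abs, inv_mul_le_iff₀ hN0]
    exact holder_pilp hq1 h f z
  have h1 := (le_iSup (fun f : {f : PiLp q' (fun _ : Fin m => ℝ) →L[ℝ] ℝ // ‖f‖ ≤ 1} =>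
    eSum (ENNReal.ofReal q) fun k => ENNReal.ofReal |f.1 (x k)|) ⟨_, hnorm⟩).trans hx
  simp only at h1
  rw [eSum_ofReal hq0 _ (fun k => abs_nonneg _), ENNReal.ofReal_le_one] at h1
  have h2 : ∑ k, |(N⁻¹ • coefFun q' f) (x k)| ^ q ≤ 1 := by
    have nn : 0 ≤ ∑ k, |(N⁻¹ • coefFun q' f) (x k)| ^ q := Finset.sum_nonneg fun k _ => by positivity
    by_contra! hcon
    exact absurd h1 (not_le.2 (Real.one_lt_rpow hcon (by positivity)))
  have h3 : ∀ k, |(N⁻¹ • coefFun q' f) (x k)| ^ q = S⁻¹ * |∑ j, f j * x k j| ^ q := by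
    intro k
    rw [ContinuousLinearMap.smul_apply, coefFun_apply, smul_eq_mul, abs_mul,
      abs_of_pos (by positivity), Real.mul_rpow (by positivity) (abs_nonneg _),
      Real.inv_rpow hN0.le, hNq]
  simp_rw [h3] at h2
  rw [← Finset.mul_sum, inv_mul_le_iff₀ hSpos, mul_one] at h2
  exact h2

/-- unit vectors -/
def uvec (q' : ℝ≥0∞) {m : ℕ} (k : Fin m) : PiLp q' (fun _ : Fin m => ℝ) :=
  WithLp.toLp q' (Pi.single k 1)

lemma weak_uvec (hq1 : 1 ≤ q) (h : 1 / ENNReal.ofReal q + 1 / q' = 1) :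
    weakLq (ENNReal.ofReal q) (fun k : Fin m => uvec q' k) ≤ 1 := by
  have hq0 : 0 < q := by linarith
  unfold weakLq
  refine iSup_le fun φ => ?_
  obtain ⟨φ, hφ⟩ := φ
  simp only
  rw [eSum_ofReal hq0 _ (fun k => abs_nonneg _), ENNReal.ofReal_le_one]
  set c : Fin m → ℝ := fun k => φ (uvec q' k) with hc
  set S := ∑ k, |c k| ^ q with hS
  change S ^ (1 / q) ≤ 1
  have hS0 : 0 ≤ S := Finset.sum_nonneg fun j _ => by positivity
  rcases hS0.eq_or_lt with hz | hSpos
  · rw [← hz, Real.zero_rpow (by positivity)]; exact zero_le_one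
  set z : PiLp q' (fun _ : Fin m => ℝ) := WithLp.toLp q' (fun k => SignType.sign (c k) * |c k| ^ (q - 1))
    with hz
  have hzs : z = ∑ k, z k • uvec q' k := by
    ext j
    simp [uvec, Pi.single_apply]
  have h1 : φ z = S := by
    rw [hzs, map_sum, hS]
    refine Finset.sum_congr rfl fun k _ => ?_
    rw [map_smul, smul_eq_mul]
    change (SignType.sign (c k) * |c k| ^ (q - 1)) * c k = _
    by_cases h0 : c k = 0
    · rw [h0]; simp [Real.zero_rpow hq0.ne']
    · have hp := abs_pos.2 h0
      have e : |c k| ^ q = |c k| ^ (q - 1) * |c k| := by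
        rw [← Real.rpow_add_one hp.ne']; congr 1; ring
      rw [e, mul_right_comm, sign_mul_self, mul_comm]
  have h2 : ‖z‖ ≤ S ^ (1 - 1 / q) := by
    rcases conj_cases hq1 h with ⟨rfl, rfl⟩ | ⟨hp, h2⟩
    · simp only [one_div, inv_one, sub_self, Real.rpow_zero]
      rw [PiLp.norm_eq_ciSup]
      refine Real.iSup_le (fun i => ?_) zero_le_one
      simp only [hz, sub_self, Real.rpow_zero, mul_one, Real.norm_eq_abs]
      rcases lt_trichotomy (c i) 0 with h | h | h
      · simp [h]
      · simp [h]
      · simp [h]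
    · have hq := h2.lt
      rw [PiLp.norm_eq_sum hp]
      have e1 : 1 - 1 / q = 1 / q'.toReal := by
        have := (Real.holderConjugate_iff.1 h2).2
        rw [one_div, one_div]; linarith
      have e2 : ∀ k, ‖z k‖ ^ q'.toReal = |c k| ^ q := by
        intro k
        have : ‖z k‖ = |c k| ^ (q - 1) := by
          change |SignType.sign (c k) * |c k| ^ (q - 1)| = _
          by_cases h0 : c k = 0
          · rw [h0, abs_zero, Real.zero_rpow (by linarith)]; simp
          · rw [abs_mul, abs_of_nonneg (by positivity : 0 ≤ |c k| ^ (q - 1))]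
            rcases lt_or_gt_of_ne h0 with h | h <;> simp [h]
        rw [this, ← Real.rpow_mul (abs_nonneg _)]
        congr 1
        exact h2.sub_one_mul_conj
      simp_rw [e2]
      rw [e1]
  have h3 : S ≤ S ^ (1 - 1 / q) := by
    calc S = φ z := h1.symm
      _ ≤ ‖φ z‖ := le_abs_self _
      _ ≤ ‖φ‖ * ‖z‖ := φ.le_opNorm z
      _ ≤ 1 * S ^ (1 - 1 / q) := by gcongr
      _ = _ := one_mul _
  have e : S = S ^ (1 - 1 / q) * S ^ (1 / q) := by
    rw [← Real.rpow_add hSpos]; simp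
  have hpos : 0 < S ^ (1 - 1 / q) := by positivity
  nlinarith

/-- the operator -/
noncomputable def opT (q' : ℝ≥0∞) [Fact (1 ≤ q')] {m n : ℕ} (σ : Fin m → Fin n → ℝ) :
    PiLp q' (fun _ : Fin m => ℝ) →L[ℝ] EuclideanSpace ℝ (Fin n) :=
  LinearMap.toContinuousLinearMap
    { toFun := fun z => WithLp.toLp 2 fun i => ∑ j, z j * σ j i
      map_add' := by intro x y; ext i; simp [add_mul, Finset.sum_add_distrib]
      map_smul' := by
        intro c x
        ext i
        simp only [PiLp.smul_apply, smul_eq_mul, RingHom.id_apply, Finset.mul_sum]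
        refine Finset.sum_congr rfl fun i _ => by ring }

lemma opT_apply {n : ℕ} (σ : Fin m → Fin n → ℝ) (z : PiLp q' (fun _ : Fin m => ℝ)) (i : Fin n) :
    opT q' σ z i = ∑ j, z j * σ j i := rfl

lemma opT_uvec {n : ℕ} (σ : Fin m → Fin n → ℝ) (hσ : ∀ j i, σ j i ^ 2 = 1) (k : Fin m) :
    ‖opT q' σ (uvec q' k)‖ = Real.sqrt n := by
  rw [EuclideanSpace.norm_eq]
  congr 1
  have : ∀ i, ‖opT q' σ (uvec q' k) i‖ ^ 2 = 1 := by
    intro i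
    rw [opT_apply, Real.norm_eq_abs, sq_abs, ← hσ k i]
    congr 1
    simp [uvec, Pi.single_apply]
  simp_rw [this]
  simp

lemma opT_norm_le {n : ℕ} (σ : Fin m → Fin n → ℝ) {s s' M : ℝ} (hs : s'.HolderConjugate s)
    (hM : ∀ y : EuclideanSpace ℝ (Fin n), (∑ j, |∑ i, σ j i * y i| ^ s) ^ (1 / s) ≤ M * ‖y‖)
    (hM0 : 0 ≤ M) (z : PiLp q' (fun _ : Fin m => ℝ)) :
    ‖opT q' σ z‖ ≤ M * (∑ j, |z j| ^ s') ^ (1 / s') := by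
  set y := opT q' σ z with hy
  have nn : 0 ≤ (∑ j, |z j| ^ s') ^ (1 / s') :=
    Real.rpow_nonneg (Finset.sum_nonneg fun j _ => by positivity) _
  rcases (norm_nonneg y).eq_or_lt with h | h
  · rw [← h]; positivity
  have h1 : ‖y‖ ^ 2 = ∑ j, z j * ∑ i, σ j i * y i := by
    rw [EuclideanSpace.norm_sq_eq]
    simp_rw [Finset.mul_sum]
    rw [Finset.sum_comm]
    refine Finset.sum_congr rfl fun i _ => ?_
    rw [Real.norm_eq_abs, sq_abs, sq]
    nth_rewrite 1 [hy]
    rw [opT_apply, Finset.sum_mul]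
    refine Finset.sum_congr rfl fun j _ => by ring
  have h2 : ‖y‖ ^ 2 ≤ (∑ j, |z j| ^ s') ^ (1 / s') * (M * ‖y‖) := by
    rw [h1]
    refine (Real.inner_le_Lp_mul_Lq Finset.univ _ _ hs).trans ?_
    gcongr
    exact hM y
  nlinarith

end fun_an

lemma main_aux {θ q s t : ℝ} {q' : ℝ≥0∞} [Fact (1 ≤ q')] (hθ0 : 0 < θ) (hθ1 : θ < 1)
    (hq1 : 1 ≤ q) (hq2 : q ≤ 2) (hqq : 1 / ENNReal.ofReal q + 1 / q' = 1) (hs : 2 ≤ s)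
    (hse : 1 / s = (1 - θ) * (1 / q').toReal + θ / 2) (hqt : q ≤ t) (hte : 1 / t = 1 / q - θ / 2)
    {n : ℕ} (hn : 0 < n) :
    ∃ T : PiLp q' (fun _ : Fin ⌊(n : ℝ) ^ (s / 2)⌋₊ => ℝ) →L[ℝ] EuclideanSpace ℝ (Fin n),
      ∀ p : ℝ, q ≤ p → p ≤ t →
        0 < piPQ (ENNReal.ofReal p) (ENNReal.ofReal q) T ∧
        ∀ k : ℕ,
          piN (ENNReal.ofReal p) (ENNReal.ofReal q) k T ≤
            ENNReal.ofReal (52 * Real.sqrt s *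
                ((k : ℝ) / (n : ℝ) ^ (s / 2)) ^ (1 / p - 1 / t)) *
              piPQ (ENNReal.ofReal p) (ENNReal.ofReal q) T := by
  have hs0 : 0 < s := by linarith
  have hn' : (0 : ℝ) < n := by exact_mod_cast hn
  have hn1 : (1 : ℝ) ≤ n := by exact_mod_cast hn
  set R := (n : ℝ) ^ (s / 2) with hR
  have hR1 : 1 ≤ R := Real.one_le_rpow hn1 (by linarith)
  set m := ⌊R⌋₊ with hm
  have hmR : (m : ℝ) ≤ R := Nat.floor_le (by linarith)
  have hm1 : 1 ≤ m := by rw [hm, Nat.one_le_floor_iff]; exact hR1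
  have hm1' : (1 : ℝ) ≤ m := by exact_mod_cast hm1
  have hRm : R ≤ 2 * m := by
    have := Nat.lt_floor_add_one R
    rw [← hm] at this
    linarith
  obtain ⟨σ, hσ1, hσ2⟩ := random_matrix hn hs hmR
  set M := 26 * (Real.sqrt s * Real.sqrt n) with hM
  have hM0 : 0 < M := by positivity
  refine ⟨opT q' σ, fun p hqp hpt => ?_⟩
  have hq0 : 0 < q := by linarith
  have hp0 : 0 < p := by linarith
  have ht0 : 0 < t := by linarith
  -- lower bound
  have hlow : ENNReal.ofReal ((m : ℝ) ^ (1 / p) * Real.sqrt n) ≤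
      piPQ (ENNReal.ofReal p) (ENNReal.ofReal q) (opT q' σ) := by
    refine le_trans ?_ (le_iSup _ m)
    refine le_trans ?_ (le_iSup (fun x : {x : Fin m → PiLp q' (fun _ : Fin m => ℝ) //
      weakLq (ENNReal.ofReal q) x ≤ 1} => eSum (ENNReal.ofReal p) fun k =>
        ENNReal.ofReal ‖opT q' σ (x.1 k)‖) ⟨_, weak_uvec hq1 hqq⟩)
    simp only
    rw [eSum_ofReal hp0 _ (fun k => norm_nonneg _)]
    refine ENNReal.ofReal_le_ofReal (le_of_eq ?_)
    simp_rw [opT_uvec σ hσ1]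
    simp only [Finset.sum_const, Finset.card_univ, Fintype.card_fin, nsmul_eq_mul]
    rw [Real.mul_rpow (by positivity) (by positivity), ← Real.rpow_mul (by positivity),
      mul_one_div_cancel hp0.ne', Real.rpow_one]
  have hlow0 : 0 < (m : ℝ) ^ (1 / p) * Real.sqrt n := by positivity
  refine ⟨lt_of_lt_of_le (ENNReal.ofReal_pos.2 hlow0) hlow, fun K => ?_⟩
  set δ := 1 / p - 1 / t with hδ
  have hδ0 : 0 ≤ δ := by
    have : 1 / t ≤ 1 / p := by gcongr
    linarith
  have hδ1 : δ ≤ 1 := by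
    have h1 : 1 / p ≤ 1 := by rw [div_le_one hp0]; linarith
    have h2 : 0 < 1 / t := by positivity
    linarith
  -- upper bound
  have hup : piN (ENNReal.ofReal p) (ENNReal.ofReal q) K (opT q' σ) ≤
      ENNReal.ofReal ((K : ℝ) ^ δ * (M * (m : ℝ) ^ (1 / t))) := by
    refine iSup_le fun ⟨x, hx⟩ => ?_
    simp only
    rw [eSum_ofReal hp0 _ (fun k => norm_nonneg _)]
    refine ENNReal.ofReal_le_ofReal ?_
    have H := weak_upper hq1 hqq x hx
    have hconj : (1 - 1 / s)⁻¹.HolderConjugate s := by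
      refine Real.HolderConjugate.symm ?_
      rw [Real.holderConjugate_iff]
      refine ⟨by linarith, ?_⟩
      simp
    set s' := (1 - 1 / s)⁻¹ with hs'
    have hs'0 : 0 < s' := hconj.pos
    have hs'e : 1 / s' = (1 - θ) / q + θ / 2 := by
      rw [hs', one_div, inv_inv, hse, conj_toReal hq1 hqq]
      ring
    have hdet := det_bound (fun k j => x k j) hq1 hq2 H hθ0 hθ1 hs'0 hs'e ht0 hte
    set a : Fin K → ℝ := fun k => ‖opT q' σ (x k)‖ with ha
    have ha0 : ∀ k, 0 ≤ a k := fun k => norm_nonneg _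
    have hak : ∀ k, a k ^ t ≤ M ^ t * (∑ j, |x k j| ^ s') ^ (t / s') := by
      intro k
      have nn : 0 ≤ ∑ j, |x k j| ^ s' := Finset.sum_nonneg fun j _ => by positivity
      refine (Real.rpow_le_rpow (ha0 k) (opT_norm_le σ hconj hσ2 hM0.le (x k)) ht0.le).trans
        (le_of_eq ?_)
      rw [Real.mul_rpow hM0.le (by positivity), ← Real.rpow_mul nn]
      congr 2
      ring
    have hsum : ∑ k, a k ^ t ≤ M ^ t * m := by
      refine (Finset.sum_le_sum fun k _ => hak k).trans ?_
      rw [← Finset.mul_sum]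
      gcongr
    have hnnt : 0 ≤ ∑ k, a k ^ t := Finset.sum_nonneg fun k _ => Real.rpow_nonneg (ha0 k) _
    have hnnp : 0 ≤ ∑ k, a k ^ p := Finset.sum_nonneg fun k _ => Real.rpow_nonneg (ha0 k) _
    have hH : ∑ k, a k ^ p ≤ (K : ℝ) ^ (1 - p / t) * (∑ k, a k ^ t) ^ (p / t) := by
      have := holder_gen Finset.univ (fun _ : Fin K => (1 : ℝ)) (fun k => a k ^ t)
        (fun k => zero_le_one) (fun k => Real.rpow_nonneg (ha0 k) _)
        (a := 1 - p / t) (b := p / t) (by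
          have : p / t ≤ 1 := by rw [div_le_one ht0]; exact hpt
          linarith) (by positivity) (by ring)
      simp only [Real.one_rpow, one_mul, Finset.sum_const, Finset.card_univ, Fintype.card_fin,
        nsmul_eq_mul, mul_one] at this
      refine le_trans (le_of_eq ?_) this
      refine Finset.sum_congr rfl fun k _ => ?_
      rw [← Real.rpow_mul (ha0 k), mul_div_cancel₀ _ ht0.ne']
    refine (Real.rpow_le_rpow hnnp hH (by positivity)).trans ?_
    rw [Real.mul_rpow (by positivity) (by positivity), ← Real.rpow_mul (by positivity),
      ← Real.rpow_mul hnnt]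
    have e1 : (1 - p / t) * (1 / p) = δ := by rw [hδ]; field_simp
    have e2 : p / t * (1 / p) = 1 / t := by field_simp
    rw [e1, e2]
    gcongr
    refine (Real.rpow_le_rpow hnnt hsum (by positivity)).trans (le_of_eq ?_)
    rw [Real.mul_rpow (by positivity) (by positivity), ← Real.rpow_mul hM0.le,
      mul_one_div_cancel ht0.ne', Real.rpow_one]
  refine hup.trans ?_
  refine le_trans ?_ (mul_le_mul_right hlow _)
  rw [← ENNReal.ofReal_mul (by positivity)]
  refine ENNReal.ofReal_le_ofReal ?_
  rw [Real.div_rpow (by positivity) (by positivity)]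
  have hm0 : (0 : ℝ) < m := by linarith
  have em : (m : ℝ) ^ (1 / p) = (m : ℝ) ^ δ * (m : ℝ) ^ (1 / t) := by
    rw [← Real.rpow_add hm0]; congr 1; rw [hδ]; ring
  have hRδ : R ^ δ ≤ 2 * (m : ℝ) ^ δ := by
    calc R ^ δ ≤ (2 * (m : ℝ)) ^ δ := by gcongr
      _ = 2 ^ δ * (m : ℝ) ^ δ := Real.mul_rpow (by norm_num) hm0.le
      _ ≤ 2 ^ (1 : ℝ) * (m : ℝ) ^ δ := by gcongr; norm_num
      _ = _ := by rw [Real.rpow_one]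
  have hRp : 0 < R ^ δ := by positivity
  rw [em, hM]
  have : 52 * Real.sqrt s * ((K : ℝ) ^ δ / R ^ δ) * ((m : ℝ) ^ δ * (m : ℝ) ^ (1 / t) * Real.sqrt n)
      = (26 * (Real.sqrt s * Real.sqrt n) * (K : ℝ) ^ δ * (m : ℝ) ^ (1 / t)) *
        (2 * (m : ℝ) ^ δ / R ^ δ) := by ring
  rw [this]
  have h1 : 1 ≤ 2 * (m : ℝ) ^ δ / R ^ δ := by rw [one_le_div hRp]; exact hRδ
  calc _ = (26 * (Real.sqrt s * Real.sqrt n) * (K : ℝ) ^ δ * (m : ℝ) ^ (1 / t)) * 1 := by ring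
    _ ≤ _ := by gcongr

/-- for `0 < θ < 1`, `1 ≤ q ≤ 2 ≤ s` and `t ≥ q` with
`1/s = (1-θ)/q' + θ/2` and `1/t = 1/q - θ/2`, there is an absolute constant
`c₀` such that for every `n ≥ 1` there is an operator
`T : ℓ_{q'}^{⌊n^{s/2}⌋} → ℓ_2^n` with `π_{p,q}(T) > 0` and
`π_{p,q}^k(T) ≤ c₀ √s (k/n^{s/2})^{1/p - 1/t} π_{p,q}(T)` for all `q ≤ p ≤ t`
and all `k`. -/
theorem statement16 :
    ∃ c₀ : ℝ, 0 < c₀ ∧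
      ∀ (θ q s t : ℝ) (q' : ℝ≥0∞), 0 < θ → θ < 1 → 1 ≤ q → q ≤ 2 →
        1 / ENNReal.ofReal q + 1 / q' = 1 → ∀ (hq' : 1 ≤ q'), 2 ≤ s →
        1 / s = (1 - θ) * (1 / q').toReal + θ / 2 → q ≤ t → 1 / t = 1 / q - θ / 2 →
        ∀ n : ℕ, 0 < n →
          haveI : Fact (1 ≤ q') := ⟨hq'⟩
          ∃ T : PiLp q' (fun _ : Fin ⌊(n : ℝ) ^ (s / 2)⌋₊ => ℝ) →L[ℝ]
              EuclideanSpace ℝ (Fin n),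
            ∀ p : ℝ, q ≤ p → p ≤ t →
              0 < piPQ (ENNReal.ofReal p) (ENNReal.ofReal q) T ∧
              ∀ k : ℕ,
                piN (ENNReal.ofReal p) (ENNReal.ofReal q) k T ≤
                  ENNReal.ofReal (c₀ * Real.sqrt s *
                      ((k : ℝ) / (n : ℝ) ^ (s / 2)) ^ (1 / p - 1 / t)) *
                    piPQ (ENNReal.ofReal p) (ENNReal.ofReal q) T := by
  refine ⟨52, by norm_num, ?_⟩
  intro θ q s t q' hθ0 hθ1 hq1 hq2 hqq hq' hs hse hqt hte n hn
  have : Fact (1 ≤ q') := ⟨hq'⟩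
  exact main_aux hθ0 hθ1 hq1 hq2 hqq hs hse hqt hte hn

end
end
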